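/- Let β ∈ [1,2). For every ε > 0 there exists K ∈ ℕ such that for every k ≥ K with n := β·2^k ∈ ℕ, one has 2^{(G(β)−ε)·n} ≤ ρ_min(n) ≤ 2^{(G(β)+ε)·n}. (That is, ρ_min(n) = 2^{G(β)·n ± o(n)} along the sequence n = β·2^k.) -/

import Mathlib

/-- The binary entropy function, `h(p) = p log₂(1/p) + (1-p) log₂(1/(1-p))`,
with the convention `h(0) = h(1) = 0` (automatic since `1/0 = 0` and `logb 2 0 = 0`). -/
noncomputable def binH (p : ℝ) : ℝ :=
  p * Real.logb 2 (1 / p) + (1 - p) * Real.logb 2 (1 / (1 - p))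

/-- `(c, b) ∈ C(β)`: `c : ℕ → [0,1]`, `∑ cᵢ/2ⁱ = 1/(β·2ᵇ)` and `∑ cᵢ ≤ 1`
(the latter expressed via partial sums, which is equivalent for nonnegative terms). -/
def memC (β : ℝ) (c : ℕ → ℝ) (b : ℕ) : Prop :=
  (∀ i, c i ∈ Set.Icc (0 : ℝ) 1) ∧
  (∑' i : ℕ, c i / 2 ^ i) = 1 / (β * 2 ^ b) ∧
  ∀ n : ℕ, (∑ i ∈ Finset.range n, c i) ≤ 1

/-- `α ∈ A(c,b)`: `α : ℕ → [0,1]` with `∑ αᵢ cᵢ / 2ⁱ = 1/(β·2^{b+1})`. -/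
def memA (β : ℝ) (b : ℕ) (c α : ℕ → ℝ) : Prop :=
  (∀ i, α i ∈ Set.Icc (0 : ℝ) 1) ∧
  (∑' i : ℕ, α i * c i / 2 ^ i) = 1 / (β * 2 ^ (b + 1))

/-- `P(c,α) = ∑ h(αᵢ)·cᵢ − h(∑ αᵢ·cᵢ)`. -/
noncomputable def Pfun (c α : ℕ → ℝ) : ℝ :=
  (∑' i : ℕ, binH (α i) * c i) - binH (∑' i : ℕ, α i * c i)

/-- `sup_{α ∈ A(c,b)} P(c,α)`. -/
noncomputable def supP (β : ℝ) (b : ℕ) (c : ℕ → ℝ) : ℝ :=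
  sSup {y | ∃ α, memA β b c α ∧ y = Pfun c α}

/-- `G(β) = inf_{(c,b) ∈ C(β)} sup_{α ∈ A(c,b)} P(c,α)`. -/
noncomputable def Gfun (β : ℝ) : ℝ :=
  sInf {y | ∃ c b, memC β c b ∧ y = supP β b c}

/-- A dyadic distribution on `X_n`: nonnegative, sums to 1, each value `0` or `2^{-k}`, `k ≥ 1`. -/
def IsDyadicDist (n : ℕ) (μ : Fin n → ℝ) : Prop :=
  (∀ i, 0 ≤ μ i) ∧ (∑ i, μ i) = 1 ∧
  ∀ i, μ i = 0 ∨ ∃ k : ℕ, 1 ≤ k ∧ μ i = ((2 : ℝ) ^ k)⁻¹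

/-- `ρ_i(Spl(μ)) = |Spl(μ)_i| / C(n,i)`. -/
noncomputable def splRatio (n : ℕ) (μ : Fin n → ℝ) (i : ℕ) : ℝ :=
  (({A : Finset (Fin n) | A.card = i ∧ (∑ x ∈ A, μ x) = 1 / 2}.ncard : ℝ)) / (n.choose i)

/-- `ρ(Spl(μ)) = max_{1 ≤ i ≤ n-1} ρ_i(Spl(μ))`. -/
noncomputable def rhoSpl (n : ℕ) (μ : Fin n → ℝ) : ℝ :=
  sSup {r | ∃ i : ℕ, 1 ≤ i ∧ i ≤ n - 1 ∧ r = splRatio n μ i}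

/-- `ρ_min(n)`: minimum of `ρ(Spl(μ))` over non-constant, full-support dyadic `μ` on `X_n`. -/
noncomputable def rhoMin (n : ℕ) : ℝ :=
  sInf {r | ∃ μ : Fin n → ℝ, IsDyadicDist n μ ∧ (∀ i, 0 < μ i) ∧
    (∃ i j, μ i ≠ μ j) ∧ r = rhoSpl n μ}

/-
Sort the atoms of a dyadic distribution `μ` on `n` points by level, `N i` being the number of atoms
of size `2 ^ (-i)`. A set taking `y i` atoms from each level `i` halves `μ` iff
`∑ y i / 2 ^ i = 1 / 2`; there are `∏ (N i).choose (y i)` such sets, of cardinality `∑ y i`. Since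
`N.choose y` is `2 ^ (N h(y / N))` up to a factor `N + 1`, over boundedly many levels their share of
all sets of that cardinality is `2 ^ (n P(c, α))` up to a factor polynomial in `n`, where
`c i = N i / n` and `α i = y i / N i`.

Upper bound: a near-optimal `(c, b)` is truncated and rounded to the level counts of an actual
distribution, the missing mass being supplied by a chain of few atoms, each half of the previous.
Lower bound: an arbitrary `μ` may use unboundedly many levels, but levels with few atoms are
negligible, and so are, for a suitable `M`, the atoms of all levels from `M` on once they are
collapsed into a fractional number of atoms of level `M`. The collapsed densities form an element of
`C(β)` essentially supported on a window of boundedly many levels; a near-optimal `α` for it is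
rounded to integer counts on the window, and the few atoms below it all join the halving set.
-/

open Filter Topology
open scoped Finset

section BinaryEntropy

lemma binH_eq_binEntropy_div (p : ℝ) : binH p = Real.binEntropy p / Real.log 2 := by
  simp only [binH, Real.binEntropy, Real.logb, one_div]
  ring

@[simp] lemma binH_zero : binH 0 = 0 := by simp [binH]

@[simp] lemma binH_one : binH 1 = 0 := by simp [binH]

lemma binH_nonneg {p : ℝ} (hp : p ∈ Set.Icc (0 : ℝ) 1) : 0 ≤ binH p := by
  rw [binH_eq_binEntropy_div]
  exact div_nonneg (Real.binEntropy_nonneg hp.1 hp.2) (Real.log_nonneg one_le_two)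

lemma binH_le_one (p : ℝ) : binH p ≤ 1 := by
  rw [binH_eq_binEntropy_div, div_le_one (Real.log_pos one_lt_two)]
  exact Real.binEntropy_le_log_two

lemma binH_mem_Icc {p : ℝ} (hp : p ∈ Set.Icc (0 : ℝ) 1) : binH p ∈ Set.Icc (0 : ℝ) 1 :=
  ⟨binH_nonneg hp, binH_le_one p⟩

@[fun_prop] lemma continuous_binH : Continuous binH := by
  rw [funext binH_eq_binEntropy_div]
  exact Real.binEntropy_continuous.div_const _

lemma concaveOn_binH : ConcaveOn ℝ (Set.Icc 0 1) binH := by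
  have h := Real.strictConcave_binEntropy.concaveOn.smul
    (inv_nonneg.2 (Real.log_nonneg one_le_two))
  exact h.congr fun p _ => by simp [binH_eq_binEntropy_div, div_eq_inv_mul]

/-- `δ` is a modulus of continuity of `binH` on `[0, 1]` for the error `ε`. -/
def IsModulusBinH (δ ε : ℝ) : Prop :=
  ∀ x ∈ Set.Icc (0 : ℝ) 1, ∀ y ∈ Set.Icc (0 : ℝ) 1, |x - y| ≤ δ → |binH x - binH y| ≤ ε

lemma exists_isModulusBinH {ε : ℝ} (hε : 0 < ε) : ∃ δ > 0, IsModulusBinH δ ε := by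
  obtain ⟨δ, hδ, h⟩ := Metric.uniformContinuousOn_iff_le.1
    (isCompact_Icc.uniformContinuousOn_of_continuous continuous_binH.continuousOn) ε hε
  exact ⟨δ, hδ, fun x hx y hy => h x hx y hy⟩

lemma hasDerivAt_binEntropy_mul_sub {s p : ℝ} (hs : s ∈ Set.Ioc (0 : ℝ) 1)
    (hp : p ∈ Set.Ioo (0 : ℝ) 1) :
    HasDerivAt (fun p => Real.binEntropy (s * p) - s * Real.binEntropy p)
      (s * (Real.log ((1 - s * p) / (1 - p)) - Real.log s)) p := by
  have hsp : s * p < 1 := (mul_le_of_le_one_left hp.1.le hs.2).trans_lt hp.2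
  have h : HasDerivAt (fun p => s * p) s p := by simpa using (hasDerivAt_id p).const_mul s
  refine (((Real.hasDerivAt_binEntropy (mul_pos hs.1 hp.1).ne' hsp.ne).comp p h).sub
    ((Real.hasDerivAt_binEntropy hp.1.ne' hp.2.ne).const_mul s)).congr_deriv ?_
  rw [Real.log_div (sub_pos.2 hsp).ne' (sub_pos.2 hp.2).ne', Real.log_mul hs.1.ne' hp.1.ne']
  ring

lemma convexOn_binH_mul_sub {s : ℝ} (hs : s ∈ Set.Ioc (0 : ℝ) 1) :
    ConvexOn ℝ (Set.Icc 0 1) fun p => binH (s * p) - s * binH p := by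
  have hderiv := fun p hp => hasDerivAt_binEntropy_mul_sub (p := p) hs hp
  have hconv : ConvexOn ℝ (Set.Icc 0 1)
      fun p => Real.binEntropy (s * p) - s * Real.binEntropy p := by
    refine MonotoneOn.convexOn_of_deriv (convex_Icc 0 1) (by fun_prop) ?_ ?_ <;>
      rw [interior_Icc]
    · exact fun p hp => (hderiv p hp).differentiableAt.differentiableWithinAt
    · intro p hp q hq hpq
      rw [(hderiv p hp).deriv, (hderiv q hq).deriv]
      have hp₁ : 0 < 1 - p := sub_pos.2 hp.2
      have hsp : 0 < 1 - s * p := by nlinarith [hs.2, hp.1, hp.2]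
      have hmono : (1 - s * p) / (1 - p) ≤ (1 - s * q) / (1 - q) := by
        rw [div_le_div_iff₀ hp₁ (sub_pos.2 hq.2)]
        nlinarith [hs.2]
      have := Real.log_le_log (div_pos hsp hp₁) hmono
      exact mul_le_mul_of_nonneg_left (by linarith) hs.1.le
  refine (hconv.smul (inv_nonneg.2 (Real.log_nonneg one_le_two))).congr fun p _ => ?_
  simp only [binH_eq_binEntropy_div, smul_eq_mul]
  ring

end BinaryEntropy

section EntropyGap

variable {ι : Type*} {s : Finset ι} {c c' α α' : ι → ℝ}

lemma convexOn_map_sum_le_of_sum_le_one {g : ℝ → ℝ} (hg : ConvexOn ℝ (Set.Icc 0 1) g)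
    (hg₀ : g 0 = 0) (hc : ∀ i ∈ s, 0 ≤ c i) (hc₁ : ∑ i ∈ s, c i ≤ 1)
    (hα : ∀ i ∈ s, α i ∈ Set.Icc (0 : ℝ) 1) :
    g (∑ i ∈ s, c i * α i) ≤ ∑ i ∈ s, c i * g (α i) := by
  have := hg.map_add_sum_le (v := 1 - ∑ i ∈ s, c i) (q := 0) hc (by ring) hα
    (by linarith) (by simp)
  simpa [hg₀] using this

lemma sum_mul_mem_Icc (hc : ∀ i ∈ s, 0 ≤ c i) (hc₁ : ∑ i ∈ s, c i ≤ 1)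
    (hα : ∀ i ∈ s, α i ∈ Set.Icc (0 : ℝ) 1) : ∑ i ∈ s, c i * α i ∈ Set.Icc (0 : ℝ) 1 :=
  ⟨Finset.sum_nonneg fun i hi => mul_nonneg (hc i hi) (hα i hi).1,
    (Finset.sum_le_sum fun i hi => mul_le_of_le_one_right (hc i hi) (hα i hi).2).trans hc₁⟩

lemma abs_sum_mul_sub_sum_mul_le {f g : ι → ℝ} {δ : ℝ} (hδ : 0 ≤ δ) (hc : ∀ i ∈ s, 0 ≤ c i)
    (hc₁ : ∑ i ∈ s, c i ≤ 1) (h : ∀ i ∈ s, |f i - g i| ≤ δ) :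
    |∑ i ∈ s, c i * f i - ∑ i ∈ s, c i * g i| ≤ δ := by
  rw [← Finset.sum_sub_distrib]
  calc |∑ i ∈ s, (c i * f i - c i * g i)| ≤ ∑ i ∈ s, |c i * f i - c i * g i| :=
        Finset.abs_sum_le_sum_abs _ _
    _ ≤ ∑ i ∈ s, c i * δ := by
        refine Finset.sum_le_sum fun i hi => ?_
        rw [← mul_sub, abs_mul, abs_of_nonneg (hc i hi)]
        exact mul_le_mul_of_nonneg_left (h i hi) (hc i hi)
    _ = (∑ i ∈ s, c i) * δ := by rw [Finset.sum_mul]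
    _ ≤ δ := mul_le_of_le_one_left hδ hc₁

lemma abs_sum_mul_sub_sum_mul_le_sum_abs_sub {f : ι → ℝ}
    (hf : ∀ i ∈ s, f i ∈ Set.Icc (0 : ℝ) 1) :
    |∑ i ∈ s, c i * f i - ∑ i ∈ s, c' i * f i| ≤ ∑ i ∈ s, |c i - c' i| := by
  rw [← Finset.sum_sub_distrib]
  refine (Finset.abs_sum_le_sum_abs _ _).trans (Finset.sum_le_sum fun i hi => ?_)
  rw [← sub_mul, abs_mul, abs_of_nonneg (hf i hi).1]
  exact mul_le_of_le_one_right (abs_nonneg _) (hf i hi).2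

/-- The finite analogue `∑ cᵢ h(αᵢ) - h(∑ cᵢ αᵢ)` of `Pfun`, over an arbitrary index set. -/
noncomputable def entropyGap (s : Finset ι) (c α : ι → ℝ) : ℝ :=
  ∑ i ∈ s, c i * binH (α i) - binH (∑ i ∈ s, c i * α i)

lemma entropyGap_congr (hc : ∀ i ∈ s, c i = c' i) (hα : ∀ i ∈ s, α i = α' i) :
    entropyGap s c α = entropyGap s c' α' := by
  have hsum : ∀ f : ℝ → ℝ, ∑ i ∈ s, c i * f (α i) = ∑ i ∈ s, c' i * f (α' i) := fun f =>
    Finset.sum_congr rfl fun i hi => by rw [hc i hi, hα i hi]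
  rw [entropyGap, entropyGap, hsum binH, hsum fun a => a]

lemma entropyGap_nonpos (hc : ∀ i ∈ s, 0 ≤ c i) (hc₁ : ∑ i ∈ s, c i ≤ 1)
    (hα : ∀ i ∈ s, α i ∈ Set.Icc (0 : ℝ) 1) : entropyGap s c α ≤ 0 := by
  have := convexOn_map_sum_le_of_sum_le_one concaveOn_binH.neg (by simp) hc hc₁ hα
  simp only [Pi.neg_apply, mul_neg, Finset.sum_neg_distrib] at this
  exact sub_nonpos.2 (neg_le_neg_iff.1 this)

lemma entropyGap_le_entropyGap_mul {t : ℝ} (ht : t ∈ Set.Icc (0 : ℝ) 1)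
    (hc : ∀ i ∈ s, 0 ≤ c i) (hc₁ : ∑ i ∈ s, c i ≤ 1)
    (hα : ∀ i ∈ s, α i ∈ Set.Icc (0 : ℝ) 1) :
    entropyGap s c α ≤ entropyGap s c fun i => t * α i := by
  have hnonpos := entropyGap_nonpos hc hc₁ hα
  rcases ht.1.eq_or_lt with rfl | ht₀
  · simpa [entropyGap] using hnonpos
  have hscale : t * entropyGap s c α ≤ entropyGap s c fun i => t * α i := by
    have h := convexOn_map_sum_le_of_sum_le_one (convexOn_binH_mul_sub ⟨ht₀, ht.2⟩) (by simp)
      hc hc₁ hα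
    unfold entropyGap
    simp only [mul_sub, Finset.sum_sub_distrib, Finset.mul_sum, mul_left_comm _ t] at h ⊢
    linarith
  nlinarith [ht.2]

lemma entropyGap_le_add_of_abs_sub_le {ε : ℝ}
    (hent : |∑ i ∈ s, c i * binH (α i) - ∑ i ∈ s, c' i * binH (α' i)| ≤ ε)
    (hmean : |binH (∑ i ∈ s, c i * α i) - binH (∑ i ∈ s, c' i * α' i)| ≤ ε) :
    entropyGap s c α ≤ entropyGap s c' α' + 2 * ε := by
  unfold entropyGap
  linarith [(abs_le.1 hent).2, (abs_le.1 hmean).1]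

lemma entropyGap_le_add_of_forall_abs_sub_le {ε δ : ℝ} (hδ : 0 ≤ δ) (hε : 0 ≤ ε)
    (hmod : IsModulusBinH δ ε) (hc : ∀ i ∈ s, 0 ≤ c i) (hc₁ : ∑ i ∈ s, c i ≤ 1)
    (hα : ∀ i ∈ s, α i ∈ Set.Icc (0 : ℝ) 1) (hα' : ∀ i ∈ s, α' i ∈ Set.Icc (0 : ℝ) 1)
    (h : ∀ i ∈ s, |α i - α' i| ≤ δ) : entropyGap s c α ≤ entropyGap s c α' + 2 * ε :=
  entropyGap_le_add_of_abs_sub_le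
    (abs_sum_mul_sub_sum_mul_le hε hc hc₁
      fun i hi => hmod _ (hα i hi) _ (hα' i hi) (h i hi))
    (hmod _ (sum_mul_mem_Icc hc hc₁ hα) _ (sum_mul_mem_Icc hc hc₁ hα')
      (abs_sum_mul_sub_sum_mul_le hδ hc hc₁ h))

lemma entropyGap_le_add_of_sum_abs_sub_le {ε δ : ℝ} (hmod : IsModulusBinH δ ε)
    (hc : ∀ i ∈ s, 0 ≤ c i) (hc₁ : ∑ i ∈ s, c i ≤ 1) (hc' : ∀ i ∈ s, 0 ≤ c' i)
    (hc'₁ : ∑ i ∈ s, c' i ≤ 1) (hα : ∀ i ∈ s, α i ∈ Set.Icc (0 : ℝ) 1)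
    (hδ : ∑ i ∈ s, |c i - c' i| ≤ δ) (hε : ∑ i ∈ s, |c i - c' i| ≤ ε) :
    entropyGap s c α ≤ entropyGap s c' α + 2 * ε :=
  entropyGap_le_add_of_abs_sub_le
    ((abs_sum_mul_sub_sum_mul_le_sum_abs_sub fun i hi => binH_mem_Icc (hα i hi)).trans hε)
    (hmod _ (sum_mul_mem_Icc hc hc₁ hα) _ (sum_mul_mem_Icc hc' hc'₁ hα)
      ((abs_sum_mul_sub_sum_mul_le_sum_abs_sub hα).trans hδ))

lemma entropyGap_le_add_of_subset [DecidableEq ι] {t : Finset ι} {ε δ : ℝ}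
    (hmod : IsModulusBinH δ ε) (hts : t ⊆ s) (hc : ∀ i ∈ s, 0 ≤ c i) (hc₁ : ∑ i ∈ s, c i ≤ 1)
    (hα : ∀ i ∈ s, α i ∈ Set.Icc (0 : ℝ) 1) (hδ : ∑ i ∈ s \ t, c i * α i ≤ δ) :
    entropyGap t c α ≤ entropyGap s c α + ε := by
  have hent : ∑ i ∈ t, c i * binH (α i) ≤ ∑ i ∈ s, c i * binH (α i) :=
    Finset.sum_le_sum_of_subset_of_nonneg hts fun i hi _ =>
      mul_nonneg (hc i hi) (binH_nonneg (hα i hi))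
  have hsplit := Finset.sum_sdiff (f := fun i => c i * α i) hts
  have hrest : 0 ≤ ∑ i ∈ s \ t, c i * α i := Finset.sum_nonneg fun i hi =>
    mul_nonneg (hc i (Finset.sdiff_subset hi)) (hα i (Finset.sdiff_subset hi)).1
  have ht : 0 ≤ ∑ i ∈ t, c i * α i := Finset.sum_nonneg fun i hi =>
    mul_nonneg (hc i (hts hi)) (hα i (hts hi)).1
  have hs := sum_mul_mem_Icc hc hc₁ hα
  have hmean := hmod _ hs _ ⟨ht, by linarith [hs.2]⟩ (abs_sub_le_iff.2 ⟨by linarith, by linarith⟩)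
  unfold entropyGap
  linarith [(abs_le.1 hmean).2]

end EntropyGap

section Binomial

variable {N y : ℕ}

lemma choose_mul_pow_mul_pow_succ {i : ℕ} (hi : i < N) (y : ℕ) :
    (N.choose (i + 1) * y ^ (i + 1) * (N - y) ^ (N - (i + 1))) * ((i + 1) * (N - y))
      = (N.choose i * y ^ i * (N - y) ^ (N - i)) * ((N - i) * y) := by
  have hsub : N - i = (N - (i + 1)) + 1 := by omega
  calc (N.choose (i + 1) * y ^ (i + 1) * (N - y) ^ (N - (i + 1))) * ((i + 1) * (N - y))
      = (N.choose (i + 1) * (i + 1)) * y ^ (i + 1) * (N - y) ^ (N - i) := by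
        rw [hsub, pow_succ (N - y)]; ring
    _ = (N.choose i * (N - i)) * y ^ (i + 1) * (N - y) ^ (N - i) := by
        rw [Nat.choose_succ_right_eq]
    _ = _ := by ring

-- The mode of the binomial distribution with parameters `N` and `y / N` is `y`.
lemma choose_mul_pow_mul_pow_le (hy : y ≤ N) (j : ℕ) :
    N.choose j * y ^ j * (N - y) ^ (N - j) ≤ N.choose y * y ^ y * (N - y) ^ (N - y) := by
  rcases lt_or_ge N j with hj | hj
  · simp [Nat.choose_eq_zero_of_lt hj]
  rcases le_total j y with hjy | hjy
  · refine Nat.decreasingInduction' (P := fun j => N.choose j * y ^ j * (N - y) ^ (N - j)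
      ≤ N.choose y * y ^ y * (N - y) ^ (N - y)) (fun i hiy _ ih => le_trans ?_ ih) hjy le_rfl
    have hpos : 0 < (N - i) * y := Nat.mul_pos (by omega) (by omega)
    refine Nat.le_of_mul_le_mul_right ?_ hpos
    rw [← choose_mul_pow_mul_pow_succ (by omega)]
    refine Nat.mul_le_mul_left _ ?_
    zify [hy, hiy.le.trans hy]
    nlinarith
  · induction j, hjy using Nat.le_induction with
    | base => exact le_rfl
    | succ i hyi ih =>
      refine le_trans ?_ (ih (by omega))
      have hpos : 0 < (i + 1) * (N - y) := Nat.mul_pos (by omega) (by omega)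
      refine Nat.le_of_mul_le_mul_right ?_ hpos
      rw [choose_mul_pow_mul_pow_succ (by omega)]
      refine Nat.mul_le_mul_left _ ?_
      have : i ≤ N := by omega
      zify [hy, this]
      nlinarith

lemma two_rpow_mul_binH_mul_pow_self (hy : y ≤ N) :
    (2 : ℝ) ^ (N * binH (y / N)) * (y ^ y * (N - y) ^ (N - y) : ℕ) = (N : ℝ) ^ N := by
  rcases Nat.eq_zero_or_pos y with rfl | hy₀
  · simp
  rcases hy.eq_or_lt with rfl | hyN
  · have : (y : ℝ) ≠ 0 := by positivity
    simp [div_self this]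
  have hN' : (0 : ℝ) < N := by exact_mod_cast hy₀.trans hyN
  have hy' : (0 : ℝ) < y := by exact_mod_cast hy₀
  have hz' : (0 : ℝ) < (N : ℝ) - y := sub_pos.2 (by exact_mod_cast hyN)
  push_cast [hy]
  refine Real.log_injOn_pos (Set.mem_Ioi.2 (by positivity)) (Set.mem_Ioi.2 (by positivity)) ?_
  rw [Real.log_mul (by positivity) (by positivity), Real.log_mul (by positivity) (by positivity),
    Real.log_rpow two_pos, Real.log_pow, Real.log_pow, Real.log_pow, binH_eq_binEntropy_div,
    Real.binEntropy, one_sub_div hN'.ne', inv_div, inv_div,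
    Real.log_div hN'.ne' hy'.ne', Real.log_div hN'.ne' hz'.ne']
  have hlog : Real.log 2 ≠ 0 := (Real.log_pos one_lt_two).ne'
  push_cast [hy]
  field_simp
  ring

lemma sum_range_choose_mul_pow_mul_pow (hy : y ≤ N) :
    ∑ j ∈ Finset.range (N + 1), N.choose j * y ^ j * (N - y) ^ (N - j) = N ^ N := by
  have := add_pow y (N - y) N
  rw [Nat.add_sub_cancel' hy] at this
  exact (Finset.sum_congr rfl fun j _ => by rw [Nat.cast_id]; ring).trans this.symm

lemma choose_le_two_rpow_mul_binH (hy : y ≤ N) :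
    (N.choose y : ℝ) ≤ (2 : ℝ) ^ (N * binH (y / N)) := by
  have hpos : 0 < y ^ y * (N - y) ^ (N - y) := Nat.mul_pos Nat.pow_self_pos Nat.pow_self_pos
  refine le_of_mul_le_mul_right ?_ (Nat.cast_pos.2 hpos)
  rw [two_rpow_mul_binH_mul_pow_self hy]
  have h : N.choose y * (y ^ y * (N - y) ^ (N - y)) ≤ N ^ N := by
    rw [← sum_range_choose_mul_pow_mul_pow hy, ← mul_assoc]
    exact Finset.single_le_sum (f := fun j => N.choose j * y ^ j * (N - y) ^ (N - j))
      (fun _ _ => Nat.zero_le _) (Finset.mem_range.2 (Nat.lt_succ_of_le hy))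
  exact_mod_cast h

lemma two_rpow_mul_binH_le_succ_mul_choose (hy : y ≤ N) :
    (2 : ℝ) ^ (N * binH (y / N)) ≤ (N + 1) * N.choose y := by
  have hpos : 0 < y ^ y * (N - y) ^ (N - y) := Nat.mul_pos Nat.pow_self_pos Nat.pow_self_pos
  refine le_of_mul_le_mul_right ?_ (Nat.cast_pos.2 hpos)
  rw [two_rpow_mul_binH_mul_pow_self hy]
  have h : N ^ N ≤ (N + 1) * N.choose y * (y ^ y * (N - y) ^ (N - y)) := by
    rw [← sum_range_choose_mul_pow_mul_pow hy]
    refine (Finset.sum_le_card_nsmul _ _ _ fun j _ => choose_mul_pow_mul_pow_le hy j).trans_eq ?_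
    simp [mul_assoc]
  exact_mod_cast h

end Binomial

section Feasible

variable {β : ℝ} {b : ℕ} {c d α α' : ℕ → ℝ}

lemma memC.nonneg (h : memC β c b) (i : ℕ) : 0 ≤ c i := (h.1 i).1

lemma memC.summable (h : memC β c b) : Summable c :=
  summable_of_sum_range_le h.nonneg h.2.2

lemma memC.tsum_le_one (h : memC β c b) : ∑' i, c i ≤ 1 :=
  h.summable.tsum_le_of_sum_range_le h.2.2

lemma memC.sum_le_one (h : memC β c b) (s : Finset ℕ) : ∑ i ∈ s, c i ≤ 1 :=
  (h.summable.sum_le_tsum s fun i _ => h.nonneg i).trans h.tsum_le_one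

lemma memC.summable_mul (h : memC β c b) {f : ℕ → ℝ} (hf : ∀ i, f i ∈ Set.Icc (0 : ℝ) 1) :
    Summable fun i => f i * c i :=
  h.summable.of_nonneg_of_le (fun i => mul_nonneg (hf i).1 (h.nonneg i))
    fun i => mul_le_of_le_one_left (h.nonneg i) (hf i).2

lemma memC.tsum_mul_mem_Icc (h : memC β c b) {f : ℕ → ℝ}
    (hf : ∀ i, f i ∈ Set.Icc (0 : ℝ) 1) : ∑' i, f i * c i ∈ Set.Icc (0 : ℝ) 1 :=
  ⟨tsum_nonneg fun i => mul_nonneg (hf i).1 (h.nonneg i),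
    ((h.summable_mul hf).tsum_le_tsum (fun i => mul_le_of_le_one_left (h.nonneg i) (hf i).2)
      h.summable).trans h.tsum_le_one⟩

lemma div_two_pow_mem_Icc {x : ℝ} (hx : x ∈ Set.Icc (0 : ℝ) 1) (i : ℕ) :
    x / 2 ^ i ∈ Set.Icc (0 : ℝ) 1 :=
  ⟨div_nonneg hx.1 (by positivity), (div_le_self hx.1 (one_le_pow₀ one_le_two)).trans hx.2⟩

lemma memC.summable_mul_div (h : memC β c b) {f : ℕ → ℝ}
    (hf : ∀ i, f i ∈ Set.Icc (0 : ℝ) 1) : Summable fun i => f i * c i / 2 ^ i :=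
  (h.summable_mul fun i => div_two_pow_mem_Icc (hf i) i).congr fun i => by ring

lemma memC.summable_div (h : memC β c b) : Summable fun i => c i / 2 ^ i := by
  simpa using h.summable_mul_div (f := fun _ => 1) (by simp)

lemma memC.tendsto_entropyGap_range (h : memC β c b) (hα : ∀ i, α i ∈ Set.Icc (0 : ℝ) 1) :
    Tendsto (fun n => entropyGap (Finset.range n) c α) atTop (𝓝 (Pfun c α)) := by
  have hent := (h.summable_mul fun i => binH_mem_Icc (hα i)).tendsto_sum_tsum_nat
  have hmean := (h.summable_mul hα).tendsto_sum_tsum_nat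
  simp only [mul_comm _ (c _)] at hent hmean
  simpa only [Pfun, entropyGap, Function.comp_def, mul_comm _ (c _)] using
    hent.sub ((continuous_binH.tendsto _).comp hmean)

lemma Pfun_indicator (s : Finset ℕ) (c α : ℕ → ℝ) :
    Pfun c ((s : Set ℕ).indicator α) = entropyGap s c α := by
  have hsum : ∀ f : ℝ → ℝ, f 0 = 0 →
      ∑' i, f ((s : Set ℕ).indicator α i) * c i = ∑ i ∈ s, c i * f (α i) := fun f hf => by
    rw [tsum_eq_sum (s := s) fun i hi => by simp [hi, hf]]
    exact Finset.sum_congr rfl fun i hi => by simp [hi, mul_comm]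
  have hmean := hsum (fun x => x) rfl
  rw [Pfun, entropyGap, hsum binH binH_zero, hmean]

lemma memC.Pfun_le_add_of_forall_abs_sub_le (h : memC β c b) {ε δ : ℝ} (hδ : 0 ≤ δ)
    (hε : 0 ≤ ε) (hmod : IsModulusBinH δ ε) (hα : ∀ i, α i ∈ Set.Icc (0 : ℝ) 1)
    (hα' : ∀ i, α' i ∈ Set.Icc (0 : ℝ) 1) (hclose : ∀ i, |α i - α' i| ≤ δ) :
    Pfun c α ≤ Pfun c α' + 2 * ε :=
  le_of_tendsto_of_tendsto' (h.tendsto_entropyGap_range hα)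
    ((h.tendsto_entropyGap_range hα').add_const _) fun n =>
      entropyGap_le_add_of_forall_abs_sub_le hδ hε hmod (fun i _ => h.nonneg i) (h.2.2 n)
        (fun i _ => hα i) (fun i _ => hα' i) fun i _ => hclose i

lemma memC.abs_Pfun_le_one (h : memC β c b) (hα : ∀ i, α i ∈ Set.Icc (0 : ℝ) 1) :
    |Pfun c α| ≤ 1 := by
  have hent := h.tsum_mul_mem_Icc fun i => binH_mem_Icc (hα i)
  have hmean := binH_mem_Icc (h.tsum_mul_mem_Icc hα)
  unfold Pfun
  rw [abs_le]
  constructor <;> linarith [hent.1, hent.2, hmean.1, hmean.2]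

lemma memC.Pfun_nonpos (h : memC β c b) (hα : ∀ i, α i ∈ Set.Icc (0 : ℝ) 1) : Pfun c α ≤ 0 :=
  le_of_tendsto' (h.tendsto_entropyGap_range hα) fun n =>
    entropyGap_nonpos (fun i _ => h.nonneg i) (h.2.2 n) fun i _ => hα i

lemma memC.memA_half (h : memC β c b) : memA β b c fun _ => 1 / 2 := by
  refine ⟨fun _ => by norm_num, ?_⟩
  simp_rw [mul_div_assoc]
  rw [tsum_mul_left, h.2.1, pow_succ]
  field_simp

lemma memC.Pfun_le_supP (h : memC β c b) (hα : memA β b c α) : Pfun c α ≤ supP β b c := by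
  refine le_csSup ⟨1, ?_⟩ ⟨α, hα, rfl⟩
  rintro _ ⟨α, hα, rfl⟩
  exact (abs_le.1 (h.abs_Pfun_le_one hα.1)).2

lemma memC.Gfun_le_supP (h : memC β c b) : Gfun β ≤ supP β b c := by
  refine csInf_le ⟨-1, ?_⟩ ⟨c, b, h, rfl⟩
  rintro _ ⟨c, b, h, rfl⟩
  exact (abs_le.1 (h.abs_Pfun_le_one h.memA_half.1)).1.trans (h.Pfun_le_supP h.memA_half)

lemma memC.exists_Gfun_sub_lt_Pfun (h : memC β c b) {ε : ℝ} (hε : 0 < ε) :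
    ∃ α, memA β b c α ∧ Gfun β - ε < Pfun c α := by
  have hlt : Gfun β - ε < supP β b c := by linarith [h.Gfun_le_supP]
  obtain ⟨_, ⟨α, hα, rfl⟩, hlt⟩ := exists_lt_of_lt_csSup
    (s := {y | ∃ α, memA β b c α ∧ y = Pfun c α}) ⟨_, _, h.memA_half, rfl⟩ hlt
  exact ⟨α, hα, hlt⟩

lemma memC_single (hb : 1 ≤ β * 2 ^ b) : memC β (Pi.single 0 (1 / (β * 2 ^ b))) b := by
  have hu₀ : 0 ≤ 1 / (β * 2 ^ b) := one_div_nonneg.2 (zero_le_one.trans hb)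
  have hu₁ : 1 / (β * 2 ^ b) ≤ 1 := div_le_one_of_le₀ hb (zero_le_one.trans hb)
  refine ⟨fun i => ?_, ?_, fun n => ?_⟩
  · rcases eq_or_ne i 0 with rfl | hi
    · simpa using And.intro hu₀ hu₁
    · simp [hi]
  · rw [tsum_eq_single 0 fun i hi => by simp [hi]]
    simp
  · rw [Finset.sum_pi_single']
    split_ifs
    exacts [hu₁, zero_le_one]

lemma memC.one_le_mul_two_pow (h : memC β c b) (hβ : 0 < β) : 1 ≤ β * 2 ^ b := by
  have hsum := (h.tsum_mul_mem_Icc fun i => div_two_pow_mem_Icc (x := 1) (by simp) i).2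
  simp_rw [one_div_mul_eq_div] at hsum
  rwa [h.2.1, div_le_one (by positivity)] at hsum

lemma exists_supP_lt_Gfun_add (hβ : 0 < β) {ε : ℝ} (hε : 0 < ε) :
    ∃ c b, memC β c b ∧ supP β b c < Gfun β + ε := by
  obtain ⟨b₀, hb₀⟩ := pow_unbounded_of_one_lt β⁻¹ (one_lt_two (α := ℝ))
  obtain ⟨_, ⟨c, b, h, rfl⟩, hlt⟩ := exists_lt_of_csInf_lt
    (s := {y | ∃ c b, memC β c b ∧ y = supP β b c})
    ⟨_, _, b₀, memC_single ((inv_lt_iff_one_lt_mul₀' hβ).1 hb₀).le, rfl⟩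
    (lt_add_of_pos_right (Gfun β) hε)
  exact ⟨c, b, h, hlt⟩

lemma Gfun_nonpos (h : memC β c b) : Gfun β ≤ 0 := by
  refine le_of_forall_pos_le_add fun ε hε => ?_
  obtain ⟨α, hα, hlt⟩ := h.exists_Gfun_sub_lt_Pfun hε
  linarith [h.Pfun_nonpos hα.1]

lemma memC.convex_combination (hc : memC β c b) (hd : memC β d b) {σ : ℝ}
    (hσ : σ ∈ Set.Icc (0 : ℝ) 1) : memC β (fun i => (1 - σ) * c i + σ * d i) b := by
  have hσ' : 0 ≤ 1 - σ := sub_nonneg.2 hσ.2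
  refine ⟨fun i => convex_Icc 0 1 (hc.1 i) (hd.1 i) hσ' hσ.1 (by ring), ?_, fun n => ?_⟩
  · simp_rw [add_div, mul_div_assoc]
    rw [(hc.summable_div.mul_left _).tsum_add (hd.summable_div.mul_left _), tsum_mul_left,
      tsum_mul_left, hc.2.1, hd.2.1]
    ring
  · rw [Finset.sum_add_distrib, ← Finset.mul_sum, ← Finset.mul_sum]
    nlinarith [hc.2.2 n, hd.2.2 n, hσ.1]

/-- The sequence `0, c₀, c₁, …`. It trades `(c, b) ∈ C(β)` for an element of `C(β)` with
exponent `b + 1`, without increasing `supP`. -/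
def shiftSeq (c : ℕ → ℝ) : ℕ → ℝ
  | 0 => 0
  | i + 1 => c i

lemma tsum_mul_shiftSeq (f c : ℕ → ℝ) :
    ∑' i, f i * shiftSeq c i = ∑' i, f (i + 1) * c i := by
  refine ((add_left_injective 1).tsum_eq (f := fun i => f i * shiftSeq c i) ?_).symm
  rintro (_ | i) hi
  · simp [shiftSeq] at hi
  · exact ⟨i, rfl⟩

lemma tsum_mul_shiftSeq_div (f c : ℕ → ℝ) :
    ∑' i, f i * shiftSeq c i / 2 ^ i = 1 / 2 * ∑' i, f (i + 1) * c i / 2 ^ i := by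
  have h := tsum_mul_shiftSeq (fun i => f i / 2 ^ i) c
  simp only [div_mul_eq_mul_div] at h
  rw [h, ← tsum_mul_left]
  exact tsum_congr fun i => by ring

lemma memC_shiftSeq (h : memC β c b) : memC β (shiftSeq c) (b + 1) := by
  refine ⟨fun i => ?_, ?_, fun n => ?_⟩
  · cases i
    · simp [shiftSeq]
    · exact h.1 _
  · have := tsum_mul_shiftSeq_div 1 c
    simp only [Pi.one_apply, one_mul] at this
    rw [this, h.2.1, pow_succ]
    ring
  · cases n with
    | zero => simp
    | succ n =>
      rw [Finset.sum_range_succ']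
      simpa [shiftSeq] using h.2.2 n

lemma supP_shiftSeq_le (h : memC β c b) : supP β (b + 1) (shiftSeq c) ≤ supP β b c := by
  refine csSup_le ⟨_, _, (memC_shiftSeq h).memA_half, rfl⟩ ?_
  rintro _ ⟨α, hα, rfl⟩
  have hmem : memA β b c fun i => α (i + 1) := by
    refine ⟨fun i => hα.1 _, ?_⟩
    have h₂ := hα.2
    rw [tsum_mul_shiftSeq_div] at h₂
    rw [← mul_right_inj' (one_half_pos (α := ℝ)).ne', h₂]
    ring
  have hP : Pfun (shiftSeq c) α = Pfun c fun i => α (i + 1) := by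
    unfold Pfun
    rw [tsum_mul_shiftSeq (fun i => binH (α i)), tsum_mul_shiftSeq]
  exact hP.trans_le (h.Pfun_le_supP hmem)

lemma memC.tsum_one_sub_mul_div (h : memC β c b) (hα : ∀ i, α i ∈ Set.Icc (0 : ℝ) 1) :
    ∑' i, (1 - α i) * c i / 2 ^ i
      = 2 * (1 / (β * 2 ^ (b + 1))) - ∑' i, α i * c i / 2 ^ i := by
  simp_rw [sub_mul, one_mul, sub_div]
  rw [h.summable_div.tsum_sub (h.summable_mul_div hα), h.2.1, pow_succ]
  field_simp

lemma memC.memA_one_sub (h : memC β c b) (hα : memA β b c α) :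
    memA β b c fun i => 1 - α i := by
  refine ⟨fun i => ⟨sub_nonneg.2 (hα.1 i).2, sub_le_self _ (hα.1 i).1⟩, ?_⟩
  rw [h.tsum_one_sub_mul_div hα.1, hα.2]
  ring

lemma exists_memA_near_of_le (hβ : 0 < β) (hα : ∀ i, α i ∈ Set.Icc (0 : ℝ) 1)
    (hle : 1 / (β * 2 ^ (b + 1)) ≤ ∑' i, α i * c i / 2 ^ i) :
    ∃ α', memA β b c α' ∧ ∀ i, |α i - α' i|
      ≤ |∑' i, α i * c i / 2 ^ i - 1 / (β * 2 ^ (b + 1))| * (β * 2 ^ (b + 1)) := by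
  set m := ∑' i, α i * c i / 2 ^ i with hm
  set B := β * 2 ^ (b + 1) with hB
  have hB₀ : 0 < B := by positivity
  have hm₀ : 0 < m := (by positivity : 0 < 1 / B).trans_le hle
  have ht : 1 / B / m ∈ Set.Icc (0 : ℝ) 1 := ⟨by positivity, (div_le_one hm₀).2 hle⟩
  refine ⟨fun i => 1 / B / m * α i, ⟨fun i => ⟨mul_nonneg ht.1 (hα i).1,
    mul_le_one₀ ht.2 (hα i).1 (hα i).2⟩, ?_⟩, fun i => ?_⟩
  · simp_rw [mul_assoc, mul_div_assoc (1 / B / m)]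
    rw [tsum_mul_left, ← hm, div_mul_cancel₀ _ hm₀.ne', hB]
  · have hfac : α i - 1 / B / m * α i = (m - 1 / B) / m * α i := by field_simp
    have hnn : 0 ≤ (m - 1 / B) / m := div_nonneg (sub_nonneg.2 hle) hm₀.le
    rw [hfac, abs_of_nonneg (mul_nonneg hnn (hα i).1), abs_of_nonneg (sub_nonneg.2 hle)]
    calc (m - 1 / B) / m * α i ≤ (m - 1 / B) / m := mul_le_of_le_one_right hnn (hα i).2
      _ ≤ (m - 1 / B) / (1 / B) :=
        div_le_div_of_nonneg_left (sub_nonneg.2 hle) (by positivity) hle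
      _ = (m - 1 / B) * B := by rw [div_div_eq_mul_div, div_one]

lemma memC.exists_memA_near (h : memC β c b) (hβ : 0 < β)
    (hα : ∀ i, α i ∈ Set.Icc (0 : ℝ) 1) :
    ∃ α', memA β b c α' ∧ ∀ i, |α i - α' i|
      ≤ |∑' i, α i * c i / 2 ^ i - 1 / (β * 2 ^ (b + 1))| * (β * 2 ^ (b + 1)) := by
  rcases le_total (1 / (β * 2 ^ (b + 1))) (∑' i, α i * c i / 2 ^ i) with hle | hle
  · exact exists_memA_near_of_le hβ hα hle
  -- `A(c, b)` is invariant under `α ↦ 1 - α`, which exchanges the two cases.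
  have hcompl := h.tsum_one_sub_mul_div hα
  obtain ⟨α', hα', hclose⟩ := exists_memA_near_of_le (b := b) (c := c)
    (α := fun i => 1 - α i) hβ
    (fun i => ⟨sub_nonneg.2 (hα i).2, sub_le_self _ (hα i).1⟩) (by linarith)
  refine ⟨_, h.memA_one_sub hα', fun i => ?_⟩
  have := hclose i
  rw [hcompl, abs_sub_comm] at this
  convert this using 2
  · ring
  · rw [abs_sub_comm]
    ring_nf

lemma memC.exists_entropyGap_le_supP_add (h : memC β c b) (hβ : 0 < β) {ε : ℝ} (hε : 0 < ε) :
    ∃ ν > 0, ∀ (s : Finset ℕ) (c' α : ℕ → ℝ), (∀ i ∈ s, 0 ≤ c' i) → ∑ i ∈ s, c' i ≤ 1 →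
      ∑ i ∈ s, |c' i - c i| ≤ ν → (∀ i ∈ s, α i ∈ Set.Icc (0 : ℝ) 1) →
      ∑ i ∈ s, α i * c' i / 2 ^ i = 1 / (β * 2 ^ (b + 1)) →
      entropyGap s c' α ≤ supP β b c + ε := by
  obtain ⟨δ, hδ, hmod⟩ := exists_isModulusBinH (ε := ε / 4) (by positivity)
  have hB : 0 < β * 2 ^ (b + 1) := by positivity
  refine ⟨min (ε / 4) (min δ (δ / (β * 2 ^ (b + 1)))), by positivity, ?_⟩
  intro s c' α hc' hc'₁ hclose hα hmass
  obtain ⟨hε', hδ', hδB⟩ : _ ∧ _ ∧ _ := by simpa only [le_min_iff] using hclose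
  set α₀ := (s : Set ℕ).indicator α with hα₀_def
  have hα₀ : ∀ i, α₀ i ∈ Set.Icc (0 : ℝ) 1 := fun i => by
    by_cases hi : i ∈ s <;> simp [hα₀_def, hi, hα]
  have hmass₀ : |∑' i, α₀ i * c i / 2 ^ i - 1 / (β * 2 ^ (b + 1))| ≤ δ / (β * 2 ^ (b + 1)) := by
    rw [← hmass, tsum_eq_sum (s := s) fun i hi => by simp [hα₀_def, hi], abs_sub_comm]
    refine le_trans (le_of_eq_of_le ?_ (abs_sum_mul_sub_sum_mul_le_sum_abs_sub (c := c')
      (c' := c) fun i hi => div_two_pow_mem_Icc (hα i hi) i)) hδB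
    congr 2 <;> refine Finset.sum_congr rfl fun i hi => ?_
    · ring
    · simp only [hα₀_def, Set.indicator_of_mem (Finset.mem_coe.2 hi)]
      ring
  obtain ⟨α', hα', hnear⟩ := h.exists_memA_near hβ hα₀
  have hnear' : ∀ i, |α₀ i - α' i| ≤ δ := fun i =>
    (hnear i).trans ((le_div_iff₀ hB).1 hmass₀)
  calc entropyGap s c' α ≤ entropyGap s c α + 2 * (ε / 4) :=
        entropyGap_le_add_of_sum_abs_sub_le hmod hc' hc'₁ (fun i _ => h.nonneg i)
          (h.sum_le_one s) hα hδ' hε'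
    _ = Pfun c α₀ + 2 * (ε / 4) := by rw [Pfun_indicator]
    _ ≤ Pfun c α' + 2 * (ε / 4) + 2 * (ε / 4) := by
        gcongr
        exact h.Pfun_le_add_of_forall_abs_sub_le hδ.le (by positivity) hmod hα₀ hα'.1 hnear'
    _ ≤ supP β b c + ε := by linarith [h.Pfun_le_supP hα']

end Feasible

section Counting

variable {X ι : Type*}

lemma sum_eq_sum_range_card_fiber_mul {lev : X → ℕ} {R : ℕ} (A : Finset X)
    (hlev : ∀ x ∈ A, lev x < R) {μ : X → ℝ} {w : ℕ → ℝ} (hμ : ∀ x ∈ A, μ x = w (lev x)) :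
    ∑ x ∈ A, μ x = ∑ i ∈ Finset.range R, #{x ∈ A | lev x = i} * w i := by
  rw [← Finset.sum_fiberwise_of_maps_to (t := Finset.range R) (g := lev)
    fun x hx => by simpa using hlev x hx]
  refine Finset.sum_congr rfl fun i _ => ?_
  rw [Finset.sum_congr rfl fun x hx => by
    rw [hμ x (Finset.mem_filter.1 hx).1, (Finset.mem_filter.1 hx).2], Finset.sum_const,
    nsmul_eq_mul]

variable [Fintype X]

lemma sum_filter_lt_eq_sum_range (lev : X → ℕ) (t : ℕ) (w : ℕ → ℝ) :
    ∑ x with lev x < t, w (lev x) = ∑ i ∈ Finset.range t, #{x | lev x = i} * w i := by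
  rw [sum_eq_sum_range_card_fiber_mul (lev := lev) (R := t) (w := w) _
    (fun x hx => (Finset.mem_filter.1 hx).2) fun _ _ => rfl]
  refine Finset.sum_congr rfl fun i hi => ?_
  have hi := Finset.mem_range.1 hi
  rw [Finset.filter_filter, Finset.filter_congr fun x _ => and_iff_right_of_imp fun h => h ▸ hi]

lemma card_filter_forall_card_fiber_eq [Fintype ι] [DecidableEq ι] (f : X → ι) (y : ι → ℕ) :
    #{A : Finset X | ∀ i, #{x ∈ A | f x = i} = y i} = ∏ i, (#{x | f x = i}).choose (y i) := by
  classical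
  have hcard : ∏ i, (#{x | f x = i}).choose (y i)
      = #(Fintype.piFinset fun i => Finset.powersetCard (y i) {x | f x = i}) := by
    simp [Fintype.card_piFinset]
  have hglue : ∀ g ∈ Fintype.piFinset fun i => Finset.powersetCard (y i) {x | f x = i},
      ∀ i, ({x ∈ ({x | x ∈ g (f x)} : Finset X) | f x = i} : Finset X) = g i := by
    intro g hg i
    simp only [Fintype.mem_piFinset, Finset.mem_powersetCard] at hg
    ext x
    simp only [Finset.mem_filter, Finset.mem_univ, true_and]
    refine ⟨fun ⟨hx, hfx⟩ => hfx ▸ hx, fun hx => ?_⟩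
    have hfx := (Finset.mem_filter.1 ((hg i).1 hx)).2
    exact ⟨hfx ▸ hx, hfx⟩
  rw [hcard]
  refine Finset.card_nbij' (fun A i => {x ∈ A | f x = i}) (fun g => ({x | x ∈ g (f x)} : Finset X))
    (fun A hA => ?_) (fun g hg => ?_) (fun A _ => by ext x; simp)
    fun g hg => funext (hglue g hg)
  · simp only [Finset.coe_filter, Finset.mem_univ, true_and, Set.mem_ofPred_eq] at hA
    simp only [Finset.mem_coe, Fintype.mem_piFinset, Finset.mem_powersetCard]
    exact fun i => ⟨Finset.filter_subset_filter _ (Finset.subset_univ _), hA i⟩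
  · simp only [Finset.coe_filter, Finset.mem_univ, true_and, Set.mem_ofPred_eq]
    intro i
    rw [hglue g hg i]
    exact (Finset.mem_powersetCard.1 (Fintype.mem_piFinset.1 hg i)).2

lemma card_filter_forall_lt_card_fiber_eq {lev : X → ℕ} {R : ℕ} (hlev : ∀ x, lev x < R)
    (y : ℕ → ℕ) :
    #{A : Finset X | ∀ i < R, #{x ∈ A | lev x = i} = y i}
      = ∏ i ∈ Finset.range R, (#{x | lev x = i}).choose (y i) := by
  have := card_filter_forall_card_fiber_eq (fun x => (⟨lev x, hlev x⟩ : Fin R)) fun i => y i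
  simp only [Fin.ext_iff] at this
  rw [Finset.prod_range, ← this]
  simp only [Fin.forall_iff]

-- Group the sets by their vector of intersection numbers with the levels.
lemma card_le_of_forall_prod_choose_le {lev : X → ℕ} {R : ℕ} (hlev : ∀ x, lev x < R)
    (S : Finset (Finset X)) {B : ℝ} (hB₀ : 0 ≤ B)
    (hB : ∀ A ∈ S, ((∏ i ∈ Finset.range R,
      (#{x | lev x = i}).choose #{x ∈ A | lev x = i} : ℕ) : ℝ) ≤ B) :
    (#S : ℝ) ≤ (Fintype.card X + 1) ^ R * B := by
  classical
  let profile : Finset X → Fin R → ℕ := fun A i => #{x ∈ A | lev x = i}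
  have hfiber : #S ≤ ⌊B⌋₊ * #(S.image profile) := by
    refine Finset.card_le_mul_card_image S _ fun v hv => ?_
    obtain ⟨A, hA, rfl⟩ := Finset.mem_image.1 hv
    refine le_trans ?_ (Nat.le_floor (hB A hA))
    rw [← card_filter_forall_lt_card_fiber_eq hlev]
    refine Finset.card_le_card fun A' hA' => ?_
    simp only [Finset.mem_filter, Finset.mem_univ, true_and] at hA' ⊢
    exact fun i hi => congrFun hA'.2 ⟨i, hi⟩
  have hprofiles : #(S.image profile) ≤ (Fintype.card X + 1) ^ R := by
    calc #(S.image profile)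
        ≤ #(Fintype.piFinset fun _ : Fin R => Finset.range (Fintype.card X + 1)) := by
          refine Finset.card_le_card fun v hv => ?_
          obtain ⟨A, _, rfl⟩ := Finset.mem_image.1 hv
          simp only [Fintype.mem_piFinset, Finset.mem_range, Nat.lt_succ_iff]
          exact fun i => Finset.card_le_univ _
      _ = _ := by simp
  calc (#S : ℝ) ≤ ⌊B⌋₊ * #(S.image profile) := by exact_mod_cast hfiber
    _ ≤ B * (Fintype.card X + 1) ^ R := by
      refine mul_le_mul (Nat.floor_le hB₀) ?_ (by positivity) hB₀
      exact_mod_cast hprofiles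
    _ = _ := mul_comm _ _

end Counting

section EntropyOfSizes

variable {ι : Type*} {s : Finset ι} {n : ℕ} {N y : ι → ℕ}

lemma natCast_mul_entropyGap (hn : 0 < n) (hy : ∀ i ∈ s, y i ≤ N i) :
    n * entropyGap s (fun i => (N i : ℝ) / n) (fun i => (y i : ℝ) / N i)
      = ∑ i ∈ s, N i * binH (y i / N i) - n * binH ((∑ i ∈ s, y i : ℕ) / n) := by
  have : (0 : ℝ) < n := by exact_mod_cast hn
  have hmean : ∀ i ∈ s, (N i : ℝ) / n * (y i / N i) = y i / n := by
    intro i hi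
    rcases Nat.eq_zero_or_pos (N i) with h0 | h0
    · simp [h0, Nat.le_zero.1 (h0 ▸ hy i hi)]
    · have : (0 : ℝ) < N i := by exact_mod_cast h0
      field_simp
  rw [entropyGap, Finset.sum_congr rfl hmean, ← Finset.sum_div, ← Nat.cast_sum, mul_sub,
    Finset.mul_sum]
  congr 1
  exact Finset.sum_congr rfl fun i _ => by field_simp

lemma prod_choose_le_two_rpow_mul_choose (hn : 0 < n) (hy : ∀ i ∈ s, y i ≤ N i)
    (hN : ∑ i ∈ s, N i ≤ n) {E : ℝ}
    (hE : entropyGap s (fun i => (N i : ℝ) / n) (fun i => (y i : ℝ) / N i) ≤ E) :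
    ((∏ i ∈ s, (N i).choose (y i) : ℕ) : ℝ)
      ≤ (n + 1) * 2 ^ (n * E) * n.choose (∑ i ∈ s, y i) := by
  have hchoose := two_rpow_mul_binH_le_succ_mul_choose ((Finset.sum_le_sum hy).trans hN)
  have hexp := mul_le_mul_of_nonneg_left hE (Nat.cast_nonneg (α := ℝ) n)
  rw [natCast_mul_entropyGap hn hy, sub_le_iff_le_add'] at hexp
  calc ((∏ i ∈ s, (N i).choose (y i) : ℕ) : ℝ)
      ≤ ∏ i ∈ s, (2 : ℝ) ^ (N i * binH (y i / N i)) := by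
        push_cast
        exact Finset.prod_le_prod (fun i _ => by positivity)
          fun i hi => choose_le_two_rpow_mul_binH (hy i hi)
    _ = 2 ^ ∑ i ∈ s, (N i : ℝ) * binH (y i / N i) := (Real.rpow_sum_of_pos two_pos _ _).symm
    _ ≤ 2 ^ (n * binH ((∑ i ∈ s, y i : ℕ) / n) + n * E) :=
        Real.rpow_le_rpow_of_exponent_le one_le_two hexp
    _ = 2 ^ (n * binH ((∑ i ∈ s, y i : ℕ) / n)) * 2 ^ (n * E) := Real.rpow_add two_pos _ _
    _ ≤ (n + 1) * n.choose (∑ i ∈ s, y i) * 2 ^ (n * E) := by gcongr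
    _ = _ := by ring

lemma two_rpow_mul_entropyGap_mul_choose_le {t : Finset ι} (hn : 0 < n)
    (hy : ∀ i ∈ s, y i ≤ N i) (hN : ∑ i ∈ s, N i ≤ n) (hts : t ⊆ s)
    (ht : ∀ i ∈ s, i ∉ t → y i = 0 ∨ y i = N i) :
    2 ^ (n * entropyGap s (fun i => (N i : ℝ) / n) (fun i => (y i : ℝ) / N i))
        * n.choose (∑ i ∈ s, y i)
      ≤ ((n : ℝ) + 1) ^ #t * (∏ i ∈ s, (N i).choose (y i) : ℕ) := by
  classical
  have hfactor : ∀ i ∈ s, (2 : ℝ) ^ (N i * binH (y i / N i))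
      ≤ (if i ∈ t then (n : ℝ) + 1 else 1) * (N i).choose (y i) := by
    intro i hi
    split_ifs with hit
    · refine (two_rpow_mul_binH_le_succ_mul_choose (hy i hi)).trans ?_
      have hNi : N i ≤ n := (Finset.single_le_sum (fun _ _ => Nat.zero_le _) hi).trans hN
      gcongr
    · rcases ht i hi hit with h | h
      · simp [h]
      · rcases eq_or_ne (N i) 0 with h₀ | h₀ <;> simp [h, h₀]
  calc 2 ^ (n * entropyGap s (fun i => (N i : ℝ) / n) (fun i => (y i : ℝ) / N i))
        * (n.choose (∑ i ∈ s, y i) : ℝ)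
      ≤ 2 ^ (n * entropyGap s (fun i => (N i : ℝ) / n) (fun i => (y i : ℝ) / N i))
        * 2 ^ (n * binH ((∑ i ∈ s, y i : ℕ) / n)) := by
        gcongr
        exact choose_le_two_rpow_mul_binH ((Finset.sum_le_sum hy).trans hN)
    _ = ∏ i ∈ s, (2 : ℝ) ^ (N i * binH (y i / N i)) := by
        rw [← Real.rpow_add two_pos, natCast_mul_entropyGap hn hy, sub_add_cancel,
          Real.rpow_sum_of_pos two_pos]
    _ ≤ ∏ i ∈ s, (if i ∈ t then (n : ℝ) + 1 else 1) * (N i).choose (y i) :=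
        Finset.prod_le_prod (fun _ _ => by positivity) hfactor
    _ = ((n : ℝ) + 1) ^ #t * (∏ i ∈ s, (N i).choose (y i) : ℕ) := by
        rw [Finset.prod_mul_distrib, Finset.prod_ite_mem, Finset.inter_eq_right.2 hts,
          Finset.prod_const, Nat.cast_prod]

end EntropyOfSizes

section Layered

/-- `μ` is a layered distribution with level function `lev`: for `i ≤ M` the atoms of level `i`
have mass `2 ^ (-(a + 1 + i))`, and the atoms of the residual level `M + 1` have total mass
`2 ^ (-(a + 1 + M))`. The upper bound on `rhoMin` comes from such distributions. -/
structure IsLayered {X : Type*} [Fintype X] (a M : ℕ) (μ : X → ℝ) (lev : X → ℕ) : Prop where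
  pos : ∀ x, 0 < μ x
  sum_eq_one : ∑ x, μ x = 1
  lev_lt : ∀ x, lev x < M + 2
  eq_of_le : ∀ x, lev x ≤ M → μ x = ((2 : ℝ) ^ (a + 1 + lev x))⁻¹
  sum_residual : ∑ x with lev x = M + 1, μ x = ((2 : ℝ) ^ (a + 1 + M))⁻¹

lemma sum_range_mul_inv_two_pow_add (N : ℕ → ℕ) (k M : ℕ) :
    ∑ i ∈ Finset.range (M + 1), N i * ((2 : ℝ) ^ (k + i))⁻¹
      = (∑ i ∈ Finset.range (M + 1), N i * 2 ^ (M - i) : ℕ) * ((2 : ℝ) ^ (k + M))⁻¹ := by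
  push_cast
  rw [Finset.sum_mul]
  refine Finset.sum_congr rfl fun i hi => ?_
  obtain ⟨j, rfl⟩ := Nat.exists_eq_add_of_le (Nat.lt_succ_iff.1 (Finset.mem_range.1 hi))
  rw [Nat.add_sub_cancel_left, ← add_assoc, pow_add _ (k + i)]
  field_simp

variable {X : Type*} [Fintype X] {a M : ℕ} {μ : X → ℝ} {lev : X → ℕ}

lemma IsLayered.comp_equiv (h : IsLayered a M μ lev) {Y : Type*} [Fintype Y] (e : Y ≃ X) :
    IsLayered a M (μ ∘ e) (lev ∘ e) where
  pos y := h.pos (e y)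
  sum_eq_one := (e.sum_comp μ).trans h.sum_eq_one
  lev_lt y := h.lev_lt (e y)
  eq_of_le y := h.eq_of_le (e y)
  sum_residual := by
    rw [← h.sum_residual, Finset.sum_filter, Finset.sum_filter]
    exact e.sum_comp fun x => if lev x = M + 1 then μ x else 0

lemma IsLayered.sum_eq_sum_range (h : IsLayered a M μ lev) {A : Finset X}
    (hA : ∀ x ∈ A, lev x ≤ M) :
    ∑ x ∈ A, μ x = ∑ i ∈ Finset.range (M + 1), #{x ∈ A | lev x = i} * ((2 : ℝ) ^ (a + 1 + i))⁻¹ :=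
  sum_eq_sum_range_card_fiber_mul A (fun x hx => Nat.lt_succ_of_le (hA x hx))
    fun x hx => h.eq_of_le x (hA x hx)

lemma IsLayered.exists_int_sum_residual_eq (h : IsLayered a M μ lev) {A : Finset X}
    (hA : ∑ x ∈ A, μ x = 1 / 2) :
    ∃ z : ℤ, ∑ x ∈ A with lev x = M + 1, μ x = z * ((2 : ℝ) ^ (a + 1 + M))⁻¹ := by
  have hlev : ∀ x ∈ ({x ∈ A | ¬lev x = M + 1} : Finset X), lev x ≤ M := fun x hx => by
    have := (Finset.mem_filter.1 hx).2
    have := h.lev_lt x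
    omega
  have hsplit := Finset.sum_filter_add_sum_filter_not A (lev · = M + 1) μ
  rw [hA, h.sum_eq_sum_range hlev, sum_range_mul_inv_two_pow_add] at hsplit
  refine ⟨2 ^ (a + M) - (∑ i ∈ Finset.range (M + 1),
    #{x ∈ {x ∈ A | ¬lev x = M + 1} | lev x = i} * 2 ^ (M - i) : ℕ), ?_⟩
  rw [eq_sub_of_add_eq hsplit, Int.cast_sub, sub_mul, add_right_comm, pow_succ]
  push_cast
  field_simp

lemma IsLayered.lev_le_of_sum_residual_eq_zero (h : IsLayered a M μ lev) {A : Finset X}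
    (hA : ∑ x ∈ A with lev x = M + 1, μ x = 0) : ∀ x ∈ A, lev x ≤ M := by
  intro x hx
  by_contra hlt
  have hx' : x ∈ ({x ∈ A | lev x = M + 1} : Finset X) :=
    Finset.mem_filter.2 ⟨hx, by have := h.lev_lt x; omega⟩
  exact (h.pos x).ne' ((Finset.sum_eq_zero_iff_of_nonneg fun y _ => (h.pos y).le).1 hA x hx')

lemma IsLayered.exists_ne (h : IsLayered a M μ lev) (hM : 0 < M) (h₀ : ∃ x, lev x = 0) :
    ∃ x y, μ x ≠ μ y := by
  obtain ⟨x, hx⟩ := h₀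
  obtain ⟨y, hy⟩ : ({y | lev y = M + 1} : Finset X).Nonempty :=
    Finset.nonempty_of_sum_ne_zero (f := μ) (h.sum_residual ▸ by positivity)
  have hle := Finset.single_le_sum (fun z _ => (h.pos z).le) hy
  rw [h.sum_residual] at hle
  refine ⟨x, y, (hle.trans_lt ?_).ne'⟩
  rw [h.eq_of_le x (by omega), hx]
  exact inv_strictAnti₀ (by positivity) (pow_lt_pow_right₀ one_lt_two (by omega))

/-- Upper bound `E` for the entropy gap of the level densities of `lev`, over all proportions
that describe sets of mass `1 / 2` avoiding the residual level of a layered distribution. -/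
def LevelGapLE (a M : ℕ) (lev : X → ℕ) (E : ℝ) : Prop :=
  ∀ α : ℕ → ℝ, (∀ i ∈ Finset.range (M + 1), α i ∈ Set.Icc (0 : ℝ) 1) →
    ∑ i ∈ Finset.range (M + 1), α i * ((#{x | lev x = i} : ℝ) / Fintype.card X) / 2 ^ i
      = 2 ^ a / Fintype.card X →
    entropyGap (Finset.range (M + 1)) (fun i => (#{x | lev x = i} : ℝ) / Fintype.card X) α ≤ E

lemma IsLayered.prod_choose_le_of_forall_lev_le (h : IsLayered a M μ lev) {E : ℝ}
    (hE : LevelGapLE a M lev E) {A : Finset X} (hlev : ∀ x ∈ A, lev x ≤ M)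
    (hA : ∑ x ∈ A, μ x = 1 / 2) :
    ((∏ i ∈ Finset.range (M + 1), (#{x | lev x = i}).choose #{x ∈ A | lev x = i} : ℕ) : ℝ)
      ≤ (Fintype.card X + 1) * 2 ^ (Fintype.card X * E) * (Fintype.card X).choose #A := by
  have hcard : #A = ∑ i ∈ Finset.range (M + 1), #{x ∈ A | lev x = i} :=
    Finset.card_eq_sum_card_fiberwise fun x hx => by simpa [Nat.lt_succ_iff] using hlev x hx
  have hle : ∀ i, #{x ∈ A | lev x = i} ≤ #{x | lev x = i} := fun i =>
    Finset.card_le_card (Finset.filter_subset_filter _ (Finset.subset_univ _))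
  have hlevels : ∑ i ∈ Finset.range (M + 1), #{x | lev x = i} ≤ Fintype.card X := by
    rw [← Finset.card_univ, Finset.card_eq_sum_card_fiberwise (s := Finset.univ) (f := lev)
      (t := Finset.range (M + 2)) fun x _ => by simpa using h.lev_lt x]
    exact Finset.sum_le_sum_of_subset (Finset.range_mono (by omega))
  have hcardX : 0 < Fintype.card X := by
    refine Fintype.card_pos_iff.2 (not_isEmpty_iff.1 fun _ => ?_)
    simpa using h.sum_eq_one
  rw [hcard]
  refine prod_choose_le_two_rpow_mul_choose hcardX (fun i _ => hle i) hlevels (hE _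
    (fun i _ => ⟨by positivity, div_le_one_of_le₀ (by exact_mod_cast hle i) (by positivity)⟩) ?_)
  have hmass : (2 : ℝ) ^ a / Fintype.card X = 2 ^ (a + 1) / Fintype.card X * (1 / 2) := by ring
  rw [hmass, ← hA, h.sum_eq_sum_range hlev, Finset.mul_sum]
  refine Finset.sum_congr rfl fun i _ => ?_
  rcases Nat.eq_zero_or_pos #{x | lev x = i} with h0 | h0
  · simp [h0, Nat.le_zero.1 (h0 ▸ hle i)]
  · have : (0 : ℝ) < #{x | lev x = i} := by exact_mod_cast h0
    rw [pow_add]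
    field_simp
    ring

lemma IsLayered.forall_lev_le_or [DecidableEq X] (h : IsLayered a M μ lev) {A : Finset X}
    (hA : ∑ x ∈ A, μ x = 1 / 2) : (∀ x ∈ A, lev x ≤ M) ∨ ∀ x ∈ Aᶜ, lev x ≤ M := by
  have hsplit : ∑ x ∈ A with lev x = M + 1, μ x + ∑ x ∈ Aᶜ with lev x = M + 1, μ x
      = ((2 : ℝ) ^ (a + 1 + M))⁻¹ := by
    rw [← h.sum_residual, Finset.sum_filter, Finset.sum_filter, Finset.sum_filter,
      Finset.sum_add_sum_compl]
  obtain ⟨z, hz⟩ := h.exists_int_sum_residual_eq hA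
  have hmem : 0 ≤ ∑ x ∈ A with lev x = M + 1, μ x := Finset.sum_nonneg fun x _ => (h.pos x).le
  have hcompl : 0 ≤ ∑ x ∈ Aᶜ with lev x = M + 1, μ x :=
    Finset.sum_nonneg fun x _ => (h.pos x).le
  have hpos : 0 < ((2 : ℝ) ^ (a + 1 + M))⁻¹ := by positivity
  have hz₀ : 0 ≤ z := by exact_mod_cast nonneg_of_mul_nonneg_left (hz ▸ hmem) hpos
  have hz₁ : z ≤ 1 := by
    have : (z : ℝ) ≤ 1 := le_of_mul_le_mul_right (by linarith) hpos
    exact_mod_cast this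
  obtain rfl | rfl : z = 0 ∨ z = 1 := by omega
  · exact .inl (h.lev_le_of_sum_residual_eq_zero (by simpa using hz))
  · refine .inr (h.lev_le_of_sum_residual_eq_zero ?_)
    push_cast at hz
    linarith

lemma IsLayered.prod_choose_le (h : IsLayered a M μ lev) {E : ℝ} (hE : LevelGapLE a M lev E)
    {A : Finset X} (hA : ∑ x ∈ A, μ x = 1 / 2) :
    ((∏ i ∈ Finset.range (M + 2), (#{x | lev x = i}).choose #{x ∈ A | lev x = i} : ℕ) : ℝ)
      ≤ (Fintype.card X + 1) * 2 ^ (Fintype.card X * E) * (Fintype.card X).choose #A := by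
  classical
  have hcompl : ∀ i, #{x ∈ A | lev x = i} + #{x ∈ Aᶜ | lev x = i} = #{x | lev x = i} := fun i => by
    rw [Finset.card_filter, Finset.card_filter, Finset.card_filter, Finset.sum_add_sum_compl]
  have hresidual : ∀ B : Finset X, (∀ x ∈ B, lev x ≤ M) → #{x ∈ B | lev x = M + 1} = 0 :=
    fun B hB => by
      rw [Finset.card_eq_zero, Finset.filter_eq_empty_iff]
      intro x hx
      have := hB x hx
      omega
  rw [Finset.prod_range_succ]
  rcases h.forall_lev_le_or hA with hlev | hlev
  · rw [hresidual A hlev, Nat.choose_zero_right, mul_one]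
    exact h.prod_choose_le_of_forall_lev_le hE hlev hA
  · have hAc : ∑ x ∈ Aᶜ, μ x = 1 / 2 := by
      linarith [Finset.sum_add_sum_compl A μ, h.sum_eq_one]
    have hbound := h.prod_choose_le_of_forall_lev_le hE hlev hAc
    rw [Finset.card_compl, Nat.choose_symm A.card_le_univ] at hbound
    rw [← hcompl (M + 1), hresidual _ hlev, add_zero, Nat.choose_self, mul_one]
    refine le_of_eq_of_le (congrArg _ (Finset.prod_congr rfl fun i _ => ?_)) hbound
    rw [← hcompl i]
    exact Nat.choose_symm_add

lemma IsLayered.splRatio_le {n : ℕ} {μ : Fin n → ℝ} {lev : Fin n → ℕ} (h : IsLayered a M μ lev)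
    {E : ℝ} (hE : LevelGapLE a M lev E) {j : ℕ} (hj : j ≤ n) :
    splRatio n μ j ≤ (n + 1) ^ (M + 3) * 2 ^ (n * E) := by
  have hset : {A : Finset (Fin n) | #A = j ∧ ∑ x ∈ A, μ x = 1 / 2}
      = (({A | #A = j ∧ ∑ x ∈ A, μ x = 1 / 2} : Finset (Finset (Fin n))) :
        Set (Finset (Fin n))) := by
    ext A
    simp
  rw [splRatio, hset, Set.ncard_coe_finset,
    div_le_iff₀ (Nat.cast_pos.2 (Nat.choose_pos hj))]
  refine (card_le_of_forall_prod_choose_le h.lev_lt _ (by positivity)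
    (B := (n + 1) * 2 ^ (n * E) * n.choose j) fun A hA => ?_).trans (le_of_eq ?_)
  · obtain ⟨rfl, hhalf⟩ := (Finset.mem_filter.1 hA).2
    simpa only [Fintype.card_fin] using h.prod_choose_le hE hhalf
  · rw [Fintype.card_fin]
    ring

lemma sum_range_inv_two_pow_min (m : ℕ) :
    ∑ j ∈ Finset.range (m + 1), ((2 : ℝ) ^ min (j + 1) m)⁻¹ = 1 := by
  have hgeom : ∀ m : ℕ, ∑ j ∈ Finset.range m, ((2 : ℝ) ^ (j + 1))⁻¹ + ((2 : ℝ) ^ m)⁻¹ = 1 := by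
    intro m
    induction m with
    | zero => simp
    | succ m ih =>
      rw [Finset.sum_range_succ, ← ih, pow_succ]
      field_simp
      ring
  rw [Finset.sum_range_succ, min_eq_right (Nat.le_succ m), ← hgeom m]
  congr 1
  exact Finset.sum_congr rfl fun j hj => by rw [min_eq_left (Finset.mem_range.1 hj)]

/-- The exponents `k` of the atoms `2 ^ (-k)` of the standard layered distribution: `N i` atoms
at each level `i ≤ M`, and a geometric chain of `D + 1` residual atoms whose last two agree. -/
def chainExponent (a M D : ℕ) (N : ℕ → ℕ) :
    (Σ i : Fin (M + 1), Fin (N i)) ⊕ Fin (D + 1) → ℕ :=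
  Sum.elim (fun p => a + 1 + p.1) fun j => a + 1 + M + min ((j : ℕ) + 1) D

/-- The level function of the standard layered distribution. -/
def chainLevel (M D : ℕ) (N : ℕ → ℕ) : (Σ i : Fin (M + 1), Fin (N i)) ⊕ Fin (D + 1) → ℕ :=
  Sum.elim (fun p => p.1) fun _ => M + 1

lemma card_filter_chainLevel_eq {i : ℕ} (hi : i ≤ M) (D : ℕ) (N : ℕ → ℕ) :
    #{x | chainLevel M D N x = i} = N i := by
  have hfin : ∀ j : Fin (M + 1), (j : ℕ) = i ↔ j = ⟨i, Nat.lt_succ_of_le hi⟩ := fun j => by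
    rw [Fin.ext_iff]
  rw [Finset.card_filter, Fintype.sum_sum_type, Fintype.sum_sigma]
  simp [chainLevel, hfin, (Nat.lt_succ_of_le hi).ne']

lemma sum_chain_residual (a M D : ℕ) (N : ℕ → ℕ) :
    ∑ j : Fin (D + 1), ((2 : ℝ) ^ chainExponent a M D N (.inr j))⁻¹
      = ((2 : ℝ) ^ (a + 1 + M))⁻¹ := by
  simp only [chainExponent, Sum.elim_inr, pow_add _ (a + 1 + M), mul_inv]
  rw [← Finset.mul_sum, ← Finset.sum_range fun j => ((2 : ℝ) ^ min (j + 1) D)⁻¹,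
    sum_range_inv_two_pow_min, mul_one]

lemma isLayered_chain {D : ℕ} {N : ℕ → ℕ}
    (hmass : ∑ i ∈ Finset.range (M + 1), N i * 2 ^ (M - i) + 1 = 2 ^ (a + 1 + M)) :
    IsLayered a M (fun x => ((2 : ℝ) ^ chainExponent a M D N x)⁻¹) (chainLevel M D N) where
  pos x := by positivity
  sum_eq_one := by
    have hlevels : ∑ p : Σ i : Fin (M + 1), Fin (N i),
        ((2 : ℝ) ^ chainExponent a M D N (.inl p))⁻¹
          = (∑ i ∈ Finset.range (M + 1), N i * 2 ^ (M - i) : ℕ) * ((2 : ℝ) ^ (a + 1 + M))⁻¹ := by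
      rw [← sum_range_mul_inv_two_pow_add, Finset.sum_range, Fintype.sum_sigma]
      simp [chainExponent]
    rw [Fintype.sum_sum_type, hlevels, sum_chain_residual, ← add_one_mul, ← Nat.cast_add_one, hmass]
    push_cast
    exact mul_inv_cancel₀ (by positivity)
  lev_lt := by
    rintro (p | j)
    · exact p.1.2.trans (Nat.lt_succ_self _)
    · exact Nat.lt_succ_self _
  eq_of_le := by
    rintro (p | j) hx
    · rfl
    · exact absurd hx (Nat.not_succ_le_self M)
  sum_residual := by
    rw [← sum_chain_residual a M D N, Finset.sum_filter, Fintype.sum_sum_type]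
    simp [chainLevel, fun p : Σ i : Fin (M + 1), Fin (N i) => p.1.2.ne]

lemma exists_isLayered {n D : ℕ} {N : ℕ → ℕ}
    (hcard : ∑ i ∈ Finset.range (M + 1), N i + (D + 1) = n)
    (hmass : ∑ i ∈ Finset.range (M + 1), N i * 2 ^ (M - i) + 1 = 2 ^ (a + 1 + M)) :
    ∃ (μ : Fin n → ℝ) (lev : Fin n → ℕ), IsDyadicDist n μ ∧ IsLayered a M μ lev ∧
      ∀ i ≤ M, #{x | lev x = i} = N i := by
  have hn : Fintype.card ((Σ i : Fin (M + 1), Fin (N i)) ⊕ Fin (D + 1)) = n := by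
    simp [← hcard, Finset.sum_range]
  let e := (Fintype.equivFinOfCardEq hn).symm
  have hlayered := (isLayered_chain (D := D) hmass).comp_equiv e
  refine ⟨_, _, ⟨fun x => (hlayered.pos x).le, hlayered.sum_eq_one,
    fun x => .inr ⟨chainExponent a M D N (e x), ?_, rfl⟩⟩, hlayered, fun i hi => ?_⟩
  · rcases e x with p | j <;> simp only [chainExponent, Sum.elim_inl, Sum.elim_inr] <;> omega
  · rw [← card_filter_chainLevel_eq hi D N, Finset.card_filter, Finset.card_filter]
    exact e.sum_comp fun x => if chainLevel M D N x = i then 1 else 0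

end Layered

section Ratio

lemma splRatio_nonneg (n : ℕ) (μ : Fin n → ℝ) (i : ℕ) : 0 ≤ splRatio n μ i := by
  unfold splRatio
  positivity

lemma rhoSpl_nonneg (n : ℕ) (μ : Fin n → ℝ) : 0 ≤ rhoSpl n μ := by
  refine Real.sSup_nonneg ?_
  rintro _ ⟨i, _, _, rfl⟩
  exact splRatio_nonneg n μ i

lemma splRatio_le_rhoSpl {n i : ℕ} (μ : Fin n → ℝ) (h₁ : 1 ≤ i) (h₂ : i ≤ n - 1) :
    splRatio n μ i ≤ rhoSpl n μ := by
  refine le_csSup (((Set.finite_Icc 1 (n - 1)).image (splRatio n μ)).bddAbove.mono ?_)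
    ⟨i, h₁, h₂, rfl⟩
  rintro _ ⟨j, hj₁, hj₂, rfl⟩
  exact ⟨j, ⟨hj₁, hj₂⟩, rfl⟩

lemma exists_pow_le_two_rpow (m : ℕ) {ε : ℝ} (hε : 0 < ε) :
    ∃ K : ℕ, ∀ n : ℕ, K ≤ n → ((n : ℝ) + 1) ^ m ≤ 2 ^ (ε * n) := by
  have hpos : 0 < (2 : ℝ) ^ ε := by positivity
  have hlim := (tendsto_pow_const_div_const_pow_of_one_lt m
    (Real.one_lt_rpow one_lt_two hε)).eventually (gt_mem_nhds (inv_pos.2 hpos))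
  obtain ⟨K, hK⟩ := Filter.eventually_atTop.1 hlim
  refine ⟨K, fun n hn => ?_⟩
  have hlt := hK (n + 1) (by omega)
  rw [div_lt_iff₀ (by positivity), pow_succ] at hlt
  rw [Real.rpow_mul zero_le_two, Real.rpow_natCast]
  push_cast at hlt
  refine hlt.le.trans_eq ?_
  field_simp

end Ratio

section LevelRounding

variable {β : ℝ} {b : ℕ} {c d : ℕ → ℝ}

lemma exists_forall_le_of_natCast_eq (hβ : 0 < β) (n₀ : ℕ) :
    ∃ K : ℕ, ∀ k, K ≤ k → ∀ n : ℕ, (n : ℝ) = β * 2 ^ k → n₀ ≤ n := by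
  have hlim : Tendsto (fun k : ℕ => β * (2 : ℝ) ^ k) atTop atTop :=
    (tendsto_pow_atTop_atTop_of_one_lt one_lt_two).const_mul_atTop hβ
  obtain ⟨K, hK⟩ := eventually_atTop.1 (hlim.eventually_ge_atTop (n₀ : ℝ))
  exact ⟨K, fun k hk n hn => Nat.cast_le.1 ((hK k hk).trans_eq hn.symm)⟩

lemma memC.sum_abs_sub_le_two (hc : memC β c b) (hd : memC β d b) (s : Finset ℕ) :
    ∑ i ∈ s, |d i - c i| ≤ 2 :=
  calc ∑ i ∈ s, |d i - c i| ≤ ∑ i ∈ s, (d i + c i) := Finset.sum_le_sum fun i _ =>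
        abs_sub_le_iff.2 ⟨by linarith [hc.nonneg i], by linarith [hd.nonneg i]⟩
    _ = ∑ i ∈ s, d i + ∑ i ∈ s, c i := Finset.sum_add_distrib
    _ ≤ 2 := by linarith [hc.sum_le_one s, hd.sum_le_one s]

-- Mix in a little of the sequence concentrated at index `0`, whose total is at most `1 / 2`.
lemma memC.exists_slack (h : memC β c (b + 1)) (hb : 1 ≤ β * 2 ^ b)
    {σ : ℝ} (hσ : σ ∈ Set.Ioc (0 : ℝ) 1) :
    ∃ c', memC β c' (b + 1) ∧ 0 < c' 0 ∧ ∑' i, c' i ≤ 1 - σ / 2 ∧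
      ∀ s : Finset ℕ, ∑ i ∈ s, |c' i - c i| ≤ 2 * σ := by
  have hb₂ : 2 ≤ β * 2 ^ (b + 1) := by
    rw [pow_succ, ← mul_assoc]
    linarith
  have hd := memC_single (one_le_two.trans hb₂)
  set u := 1 / (β * 2 ^ (b + 1))
  have hu₀ : 0 < u := one_div_pos.2 (by linarith)
  have hu₁ : u ≤ 1 / 2 := one_div_le_one_div_of_le two_pos hb₂
  refine ⟨_, h.convex_combination hd (Set.Ioc_subset_Icc_self hσ), ?_, ?_, fun s => ?_⟩
  · rw [Pi.single_eq_same]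
    have := mul_nonneg (sub_nonneg.2 hσ.2) (h.nonneg 0)
    have := mul_pos hσ.1 hu₀
    linarith
  · rw [(h.summable.mul_left _).tsum_add (hd.summable.mul_left _), tsum_mul_left, tsum_mul_left,
      tsum_pi_single]
    nlinarith [h.tsum_le_one, hσ.1, hσ.2]
  · have hdiff : ∀ i, (1 - σ) * c i + σ * (Pi.single 0 u : ℕ → ℝ) i - c i
        = σ * ((Pi.single 0 u : ℕ → ℝ) i - c i) := fun i => by ring
    simp_rw [hdiff, abs_mul, abs_of_pos hσ.1]
    rw [← Finset.mul_sum, mul_comm]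
    exact mul_le_mul_of_nonneg_right (h.sum_abs_sub_le_two hd s) hσ.1.le

lemma natCast_ceil_sub_one_lt {x : ℝ} (hx : 0 < x) : ((⌈x⌉₊ - 1 : ℕ) : ℝ) < x := by
  rw [Nat.cast_sub (Nat.ceil_pos.2 hx), Nat.cast_one]
  linarith [Nat.ceil_lt_add_one hx.le]

lemma natCast_ceil_sub_one_mem_Icc {x : ℝ} (hx : 0 ≤ x) :
    ((⌈x⌉₊ - 1 : ℕ) : ℝ) ∈ Set.Icc (x - 1) x := by
  rcases hx.eq_or_lt with rfl | hx
  · simp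
  · refine ⟨?_, (natCast_ceil_sub_one_lt hx).le⟩
    rw [Nat.cast_sub (Nat.ceil_pos.2 hx), Nat.cast_one]
    linarith [Nat.le_ceil x]

variable {x : ℕ → ℝ} {a M : ℕ}

lemma two_pow_mul_sum_range_div (x : ℕ → ℝ) (M : ℕ) :
    2 ^ M * ∑ i ∈ Finset.range M, x i / 2 ^ i = ∑ i ∈ Finset.range M, x i * 2 ^ (M - i) := by
  rw [Finset.mul_sum]
  refine Finset.sum_congr rfl fun i hi => ?_
  rw [pow_sub₀ _ two_ne_zero (Finset.mem_range.1 hi).le]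
  field_simp

lemma two_pow_mul_tsum_div_le (hx : ∀ i, 0 ≤ x i) (hsum : Summable x) (M : ℕ) :
    2 ^ M * ∑' i, x (i + M) / 2 ^ (i + M) ≤ ∑' i, x (i + M) := by
  have hterm : ∀ i, 2 ^ M * (x (i + M) / 2 ^ (i + M)) ≤ x (i + M) := fun i => by
    rw [pow_add, mul_div_assoc', mul_comm, mul_div_mul_right _ _ (by positivity)]
    exact div_le_self (hx _) (one_le_pow₀ one_le_two)
  have htail := (summable_nat_add_iff M).2 hsum
  rw [← tsum_mul_left]
  exact (htail.of_nonneg_of_le (fun i => by have := hx (i + M); positivity) hterm).tsum_le_tsum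
    hterm htail

-- Levels below `M` are rounded down; level `M` absorbs the missing mass.
lemma exists_nat_levels (hx : ∀ i, 0 ≤ x i) (hx₀ : 1 < x 0) (hsum : Summable x)
    (hmass : ∑' i, x i / 2 ^ i = 2 ^ a) (hM : 0 < M) :
    ∃ N : ℕ → ℕ, 0 < N 0 ∧ (∀ i < M, (N i : ℝ) ∈ Set.Icc (x i - 1) (x i)) ∧
      ∑ i ∈ Finset.range (M + 1), N i * 2 ^ (M - i) + 1 = 2 ^ (a + M) ∧
      (N M : ℝ) ≤ ∑' i, x (i + M) + M * 2 ^ M := by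
  set T := ∑ i ∈ Finset.range M, (⌈x i⌉₊ - 1) * 2 ^ (M - i) with hT
  have hdiv : Summable fun i => x i / 2 ^ i := hsum.of_nonneg_of_le
    (fun i => by have := hx i; positivity) fun i => div_le_self (hx i) (one_le_pow₀ one_le_two)
  have htot : ∑ i ∈ Finset.range M, x i * 2 ^ (M - i) + 2 ^ M * ∑' i, x (i + M) / 2 ^ (i + M)
      = 2 ^ (a + M) := by
    rw [← two_pow_mul_sum_range_div, ← mul_add, hdiv.sum_add_tsum_nat_add M, hmass, pow_add,
      mul_comm]
  have hT_lt : (T : ℝ) < ∑ i ∈ Finset.range M, x i * 2 ^ (M - i) := by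
    push_cast [hT]
    exact Finset.sum_lt_sum (fun i _ => mul_le_mul_of_nonneg_right
      (natCast_ceil_sub_one_mem_Icc (hx i)).2 (by positivity)) ⟨0, Finset.mem_range.2 hM,
      mul_lt_mul_of_pos_right (natCast_ceil_sub_one_lt (by linarith)) (by positivity)⟩
  have hT_ge : ∑ i ∈ Finset.range M, x i * 2 ^ (M - i) ≤ T + M * 2 ^ M := by
    have hconst : (M : ℝ) * 2 ^ M = ∑ _i ∈ Finset.range M, (2 : ℝ) ^ M := by simp
    push_cast [hT, hconst]
    rw [← Finset.sum_add_distrib]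
    refine Finset.sum_le_sum fun i _ => ?_
    have hpow : (2 : ℝ) ^ (M - i) ≤ 2 ^ M := pow_le_pow_right₀ one_le_two (Nat.sub_le _ _)
    nlinarith [(natCast_ceil_sub_one_mem_Icc (hx i)).1, show (0 : ℝ) < 2 ^ (M - i) by positivity]
  have htail : 0 ≤ 2 ^ M * ∑' i, x (i + M) / 2 ^ (i + M) :=
    mul_nonneg (by positivity) (tsum_nonneg fun i => div_nonneg (hx _) (by positivity))
  have hT_lt' : T < 2 ^ (a + M) := by
    have : (T : ℝ) < 2 ^ (a + M) := by linarith
    exact_mod_cast this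
  refine ⟨fun i => if i < M then ⌈x i⌉₊ - 1 else 2 ^ (a + M) - 1 - T, ?_, fun i hi => ?_, ?_, ?_⟩
  · simpa [hM, Nat.sub_pos_iff_lt, Nat.lt_ceil] using hx₀
  · simpa only [if_pos hi] using natCast_ceil_sub_one_mem_Icc (hx i)
  · beta_reduce
    rw [Finset.sum_range_succ, if_neg (lt_irrefl M), Nat.sub_self, pow_zero, mul_one,
      Finset.sum_congr rfl fun i hi => by rw [if_pos (Finset.mem_range.1 hi)]]
    omega
  · beta_reduce
    rw [if_neg (lt_irrefl M), Nat.sub_sub, Nat.cast_sub (by omega)]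
    push_cast
    linarith [two_pow_mul_tsum_div_le hx hsum M]

lemma exists_nat_levels_near (hx : ∀ i, 0 ≤ x i) (hx₀ : 1 < x 0) (hsum : Summable x)
    (hmass : ∑' i, x i / 2 ^ i = 2 ^ a) (hM : 0 < M) :
    ∃ N : ℕ → ℕ, 0 < N 0 ∧
      ∑ i ∈ Finset.range (M + 1), N i * 2 ^ (M - i) + 1 = 2 ^ (a + M) ∧
      ∑ i ∈ Finset.range (M + 1), (N i : ℝ) ≤ ∑' i, x i + M * 2 ^ M ∧
      ∑ i ∈ Finset.range (M + 1), |(N i : ℝ) - x i|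
        ≤ M + M * 2 ^ M + 2 * ∑' i, x (i + M) := by
  obtain ⟨N, hN₀, hN, hNmass, hNM⟩ := exists_nat_levels hx hx₀ hsum hmass hM
  have hxM : x M ≤ ∑' i, x (i + M) := by
    simpa using ((summable_nat_add_iff M).2 hsum).le_tsum 0 fun i _ => hx _
  refine ⟨N, hN₀, hNmass, ?_, ?_⟩ <;> rw [Finset.sum_range_succ]
  · have hlow : ∑ i ∈ Finset.range M, (N i : ℝ) ≤ ∑ i ∈ Finset.range M, x i :=
      Finset.sum_le_sum fun i hi => (hN i (Finset.mem_range.1 hi)).2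
    linarith [hsum.sum_add_tsum_nat_add M]
  · have hlow : ∑ i ∈ Finset.range M, |(N i : ℝ) - x i| ≤ M := by
      refine (Finset.sum_le_card_nsmul _ _ 1 fun i hi => ?_).trans (by simp)
      have := hN i (Finset.mem_range.1 hi)
      exact abs_sub_le_iff.2 ⟨by linarith [this.2], by linarith [this.1]⟩
    have hlast : |(N M : ℝ) - x M| ≤ M * 2 ^ M + 2 * ∑' i, x (i + M) :=
      abs_sub_le_iff.2 ⟨by linarith [hx M], by
        linarith [show (0 : ℝ) ≤ N M + M * 2 ^ M by positivity, hx M]⟩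
    linarith

lemma memC.exists_rounding (h : memC β c b) (hβ : 0 < β) (hc₀ : 0 < c 0)
    (hslack : ∑' i, c i < 1) {ν : ℝ} (hν : 0 < ν) :
    ∃ M K : ℕ, 0 < M ∧ ∀ a, K ≤ a → ∀ n : ℕ, (n : ℝ) = β * 2 ^ (a + b) → ∃ N : ℕ → ℕ,
      0 < N 0 ∧ ∑ i ∈ Finset.range (M + 1), N i < n ∧
      ∑ i ∈ Finset.range (M + 1), N i * 2 ^ (M - i) + 1 = 2 ^ (a + M) ∧
      ∑ i ∈ Finset.range (M + 1), |(N i : ℝ) / n - c i| ≤ ν := by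
  obtain ⟨M, htail, hM⟩ := (((tendsto_sum_nat_add c).eventually
    (gt_mem_nhds (show (0 : ℝ) < ν / 4 by positivity))).and (eventually_gt_atTop 0)).exists
  have hlarge : ∀ {r : ℝ}, 0 < r → ∀ t, ∀ᶠ n : ℕ in atTop, t < n * r := fun hr t =>
    (tendsto_natCast_atTop_atTop.atTop_mul_const hr).eventually_gt_atTop t
  obtain ⟨n₀, hn₀⟩ := eventually_atTop.1 ((hlarge hc₀ 1).and ((hlarge (sub_pos.2 hslack)
    (M * 2 ^ M)).and (hlarge (half_pos hν) (M + M * 2 ^ M))))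
  obtain ⟨K, hK⟩ := exists_forall_le_of_natCast_eq hβ n₀
  refine ⟨M, K, hM, fun a ha n hn => ?_⟩
  obtain ⟨hn₀, hnslack, hnν⟩ := hn₀ n (hK _ (by omega) n hn)
  have hn_pos : (0 : ℝ) < n := by rw [hn]; positivity
  have hmass : ∑' i, n * c i / 2 ^ i = 2 ^ a := by
    simp_rw [mul_div_assoc]
    rw [tsum_mul_left, h.2.1, hn, pow_add]
    field_simp
  obtain ⟨N, hN₀, hNmass, hNsum, hNclose⟩ := exists_nat_levels_near (x := fun i => n * c i)
    (fun i => mul_nonneg hn_pos.le (h.nonneg i)) hn₀ (h.summable.mul_left _) hmass hM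
  rw [tsum_mul_left] at hNsum hNclose
  refine ⟨N, hN₀, ?_, hNmass, ?_⟩
  · have : ((∑ i ∈ Finset.range (M + 1), N i : ℕ) : ℝ) < n := by
      push_cast
      linarith
    exact_mod_cast this
  · have hscale : ∀ i, |(N i : ℝ) / n - c i| = |(N i : ℝ) - n * c i| / n := fun i => by
      rw [← abs_of_pos hn_pos, ← abs_div, abs_of_pos hn_pos]
      field_simp
    simp_rw [hscale]
    rw [← Finset.sum_div, div_le_iff₀ hn_pos]
    nlinarith

end LevelRounding

section UpperBound

variable {β ε : ℝ}

lemma exists_level_sizes_entropyGap_le (hβ : 0 < β) (hε : 0 < ε) :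
    ∃ b M K : ℕ, 0 < M ∧ ∀ a, K ≤ a → ∀ n : ℕ, (n : ℝ) = β * 2 ^ (a + 1 + b) → ∃ N : ℕ → ℕ,
      0 < N 0 ∧ ∑ i ∈ Finset.range (M + 1), N i < n ∧
      ∑ i ∈ Finset.range (M + 1), N i * 2 ^ (M - i) + 1 = 2 ^ (a + 1 + M) ∧
      ∀ α : ℕ → ℝ, (∀ i ∈ Finset.range (M + 1), α i ∈ Set.Icc (0 : ℝ) 1) →
        ∑ i ∈ Finset.range (M + 1), α i * ((N i : ℝ) / n) / 2 ^ i = 2 ^ a / n →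
        entropyGap (Finset.range (M + 1)) (fun i => (N i : ℝ) / n) α ≤ Gfun β + ε := by
  obtain ⟨c, b, hc, hG⟩ := exists_supP_lt_Gfun_add hβ (ε := ε / 2) (by positivity)
  obtain ⟨ν, hν, hgap⟩ := (memC_shiftSeq hc).exists_entropyGap_le_supP_add hβ
    (ε := ε / 2) (by positivity)
  have hσ : min (ν / 4) 1 ∈ Set.Ioc (0 : ℝ) 1 := ⟨by positivity, min_le_right _ _⟩
  obtain ⟨c', hc', hc'₀, hslack, hclose⟩ := (memC_shiftSeq hc).exists_slack
    (hc.one_le_mul_two_pow hβ) hσ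
  obtain ⟨M, K, hM, hround⟩ := hc'.exists_rounding hβ hc'₀ (by linarith [hσ.1]) (half_pos hν)
  refine ⟨b + 1, M, K, hM, fun a ha n hn => ?_⟩
  obtain ⟨N, hN₀, hNn, hNmass, hNc⟩ := hround (a + 1) (by omega) n hn
  refine ⟨N, hN₀, hNn, hNmass, fun α hα hα_mass => ?_⟩
  have hn₀ : (0 : ℝ) < n := by exact_mod_cast (Nat.zero_le _).trans_lt hNn
  have hNsum : ∑ i ∈ Finset.range (M + 1), (N i : ℝ) / n ≤ 1 := by
    rw [← Finset.sum_div, div_le_one hn₀]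
    exact_mod_cast hNn.le
  have hdist : ∑ i ∈ Finset.range (M + 1), |(N i : ℝ) / n - shiftSeq c i| ≤ ν := by
    have htri := Finset.sum_le_sum fun i (_ : i ∈ Finset.range (M + 1)) =>
      abs_sub_le ((N i : ℝ) / n) (c' i) (shiftSeq c i)
    rw [Finset.sum_add_distrib] at htri
    linarith [hclose (Finset.range (M + 1)), min_le_left (ν / 4) 1]
  have hmass : (2 : ℝ) ^ a / n = 1 / (β * 2 ^ (b + 1 + 1)) := by
    rw [hn]
    field_simp
    ring
  linarith [hgap _ (fun i => (N i : ℝ) / n) α (fun i _ => by positivity) hNsum hdist hα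
    (hα_mass.trans hmass), supP_shiftSeq_le hc]

lemma IsLayered.rhoSpl_le {n a M : ℕ} {μ : Fin n → ℝ} {lev : Fin n → ℕ}
    (h : IsLayered a M μ lev) {E : ℝ} (hE : LevelGapLE a M lev E)
    (hpoly : ((n : ℝ) + 1) ^ (M + 3) ≤ 2 ^ (ε * n)) : rhoSpl n μ ≤ 2 ^ ((E + ε) * n) := by
  refine Real.sSup_le ?_ (by positivity)
  rintro _ ⟨j, _, hj, rfl⟩
  calc splRatio n μ j ≤ (n + 1) ^ (M + 3) * 2 ^ (n * E) := h.splRatio_le hE (by omega)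
    _ ≤ 2 ^ (ε * n) * 2 ^ (n * E) := by gcongr
    _ = 2 ^ ((E + ε) * n) := by
      rw [← Real.rpow_add two_pos]
      ring_nf

lemma exists_dist_rhoSpl_le (hβ : 0 < β) (hε : 0 < ε) :
    ∃ K : ℕ, ∀ k, K ≤ k → ∀ n : ℕ, (n : ℝ) = β * 2 ^ k → ∃ μ : Fin n → ℝ,
      IsDyadicDist n μ ∧ (∀ i, 0 < μ i) ∧ (∃ i j, μ i ≠ μ j) ∧
      rhoSpl n μ ≤ 2 ^ ((Gfun β + ε) * n) := by
  obtain ⟨b, M, K₁, hM, hlevels⟩ := exists_level_sizes_entropyGap_le hβ (half_pos hε)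
  obtain ⟨K₂, hpoly⟩ := exists_pow_le_two_rpow (M + 3) (half_pos hε)
  obtain ⟨K₃, hlarge⟩ := exists_forall_le_of_natCast_eq hβ K₂
  refine ⟨K₁ + K₃ + (1 + b), fun k hk n hn => ?_⟩
  obtain ⟨a, rfl⟩ := Nat.exists_eq_add_of_le' (show 1 + b ≤ k by omega)
  rw [← add_assoc] at hn
  obtain ⟨N, hN₀, hNn, hNmass, hgap⟩ := hlevels a (by omega) n hn
  obtain ⟨D, hD⟩ := Nat.exists_eq_add_of_lt hNn
  obtain ⟨μ, lev, hdyadic, hμ, hcard⟩ := exists_isLayered hD.symm hNmass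
  have hE : LevelGapLE a M lev (Gfun β + ε / 2) := by
    have hdens : ∀ i ∈ Finset.range (M + 1), (#{x | lev x = i} : ℝ) / n = N i / n := fun i hi => by
      rw [hcard i (Nat.lt_succ_iff.1 (Finset.mem_range.1 hi))]
    intro α hα hα_mass
    rw [Fintype.card_fin] at hα_mass ⊢
    rw [Finset.sum_congr rfl fun i hi => by rw [hdens i hi]] at hα_mass
    exact (entropyGap_congr hdens fun _ _ => rfl).trans_le (hgap α hα hα_mass)
  have hlev₀ : ∃ x, lev x = 0 := by
    have hpos : 0 < #{x | lev x = 0} := hcard 0 (Nat.zero_le M) ▸ hN₀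
    obtain ⟨x, hx⟩ := Finset.card_pos.1 hpos
    exact ⟨x, (Finset.mem_filter.1 hx).2⟩
  refine ⟨μ, hdyadic, hμ.pos, hμ.exists_ne hM hlev₀, ?_⟩
  rw [show Gfun β + ε = Gfun β + ε / 2 + ε / 2 by ring]
  exact hμ.rhoSpl_le hE (hpoly n (hlarge _ (by omega) n hn))

end UpperBound

section HalvingSets

variable {n : ℕ} {μ : Fin n → ℝ} {e : Fin n → ℕ}

/-- `μ` is a full-support dyadic distribution whose atom at `x` is `2 ^ (-(e x))`. -/
structure HasExponents (μ : Fin n → ℝ) (e : Fin n → ℕ) : Prop where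
  one_le : ∀ x, 1 ≤ e x
  eq_inv : ∀ x, μ x = ((2 : ℝ) ^ e x)⁻¹
  sum_eq_one : ∑ x, μ x = 1

lemma HasExponents.pos (h : HasExponents μ e) : 0 < n := by
  rcases Nat.eq_zero_or_pos n with rfl | hn
  · simpa using h.sum_eq_one
  · exact hn

lemma HasExponents.nonneg (h : HasExponents μ e) (x : Fin n) : 0 ≤ μ x := by
  rw [h.eq_inv]
  positivity

lemma card_div_choose_le_rhoSpl {s : ℕ} (hμ₁ : ∑ x, μ x = 1) {S : Finset (Finset (Fin n))}
    (hS : S.Nonempty) (hs : ∀ A ∈ S, #A = s) (hhalf : ∀ A ∈ S, ∑ x ∈ A, μ x = 1 / 2) :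
    (#S : ℝ) / n.choose s ≤ rhoSpl n μ := by
  obtain ⟨A, hA⟩ := hS
  have hsum := hhalf A hA
  have hs₀ : 1 ≤ s := by
    rw [← hs A hA, Nat.one_le_iff_ne_zero, Finset.card_ne_zero, Finset.nonempty_iff_ne_empty]
    rintro rfl
    norm_num at hsum
  have hsn : s < n := by
    rw [← hs A hA]
    refine lt_of_le_of_ne (by simpa using A.card_le_univ) fun h => ?_
    rw [(Finset.card_eq_iff_eq_univ A).1 (by simpa using h), hμ₁] at hsum
    norm_num at hsum
  refine le_trans ?_ (splRatio_le_rhoSpl μ hs₀ (by omega))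
  have hsub : (S : Set (Finset (Fin n))) ⊆ {A | #A = s ∧ ∑ x ∈ A, μ x = 1 / 2} :=
    fun A hA => ⟨hs A hA, hhalf A hA⟩
  have hcard := Set.ncard_le_ncard hsub (Set.toFinite _)
  rw [Set.ncard_coe_finset] at hcard
  unfold splRatio
  gcongr

lemma HasExponents.prod_choose_div_choose_le_rhoSpl (h : HasExponents μ e) {R : ℕ}
    (hR : ∀ x, e x < R) {y : ℕ → ℕ} (hy : ∀ i ∈ Finset.range R, y i ≤ #{x | e x = i})
    (hmass : ∑ i ∈ Finset.range R, (y i : ℝ) * ((2 : ℝ) ^ i)⁻¹ = 1 / 2) :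
    ((∏ i ∈ Finset.range R, (#{x | e x = i}).choose (y i) : ℕ) : ℝ)
      / n.choose (∑ i ∈ Finset.range R, y i) ≤ rhoSpl n μ := by
  rw [← card_filter_forall_lt_card_fiber_eq hR]
  have hfiber : ∀ A ∈ ({A | ∀ i < R, #{x ∈ A | e x = i} = y i} : Finset (Finset (Fin n))),
      ∀ i ∈ Finset.range R, #{x ∈ A | e x = i} = y i :=
    fun A hA i hi => (Finset.mem_filter.1 hA).2 i (Finset.mem_range.1 hi)
  refine card_div_choose_le_rhoSpl h.sum_eq_one ?_ (fun A hA => ?_) fun A hA => ?_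
  · rw [← Finset.card_pos, card_filter_forall_lt_card_fiber_eq hR]
    exact Finset.prod_pos fun i hi => Nat.choose_pos (hy i hi)
  · rw [Finset.card_eq_sum_card_fiberwise fun x _ => Finset.mem_coe.2 (Finset.mem_range.2 (hR x))]
    exact Finset.sum_congr rfl (hfiber A hA)
  · rw [← hmass, sum_eq_sum_range_card_fiber_mul A (fun x _ => hR x)
      (w := fun i => ((2 : ℝ) ^ i)⁻¹) fun x _ => h.eq_inv x]
    exact Finset.sum_congr rfl fun i hi => by rw [hfiber A hA i hi]

lemma sum_range_card_fiber_eq {R : ℕ} (hR : ∀ x, e x < R) :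
    ∑ i ∈ Finset.range R, #{x | e x = i} = n := by
  rw [← Finset.card_eq_sum_card_fiberwise fun x _ => Finset.mem_coe.2 (Finset.mem_range.2 (hR x)),
    Finset.card_univ, Fintype.card_fin]

lemma HasExponents.two_rpow_mul_entropyGap_le (h : HasExponents μ e) {R : ℕ}
    (hR : ∀ x, e x < R) {y : ℕ → ℕ} (hy : ∀ i ∈ Finset.range R, y i ≤ #{x | e x = i})
    (hmass : ∑ i ∈ Finset.range R, (y i : ℝ) * ((2 : ℝ) ^ i)⁻¹ = 1 / 2) {G : Finset ℕ}
    (hGR : G ⊆ Finset.range R)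
    (hG : ∀ i ∈ Finset.range R, i ∉ G → y i = 0 ∨ y i = #{x | e x = i}) :
    2 ^ (n * entropyGap (Finset.range R) (fun i => (#{x | e x = i} : ℝ) / n)
        fun i => (y i : ℝ) / #{x | e x = i}) ≤ ((n : ℝ) + 1) ^ #G * rhoSpl n μ := by
  have hN := sum_range_card_fiber_eq hR
  have hchoose : (0 : ℝ) < n.choose (∑ i ∈ Finset.range R, y i) :=
    Nat.cast_pos.2 (Nat.choose_pos ((Finset.sum_le_sum hy).trans hN.le))
  refine le_of_mul_le_mul_right ?_ hchoose
  calc _ ≤ ((n : ℝ) + 1) ^ #G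
        * (∏ i ∈ Finset.range R, (#{x | e x = i}).choose (y i) : ℕ) :=
        two_rpow_mul_entropyGap_mul_choose_le h.pos hy hN.le hGR hG
    _ ≤ ((n : ℝ) + 1) ^ #G * (rhoSpl n μ * n.choose (∑ i ∈ Finset.range R, y i)) := by
        have := (div_le_iff₀ hchoose).1 (h.prod_choose_div_choose_le_rhoSpl hR hy hmass)
        gcongr
    _ = _ := (mul_assoc _ _ _).symm

-- Discard the lightest atoms one by one: all masses are multiples of the lightest one, so the
-- total cannot jump over `1 / 2`.
lemma HasExponents.exists_subset_sum_eq_half (h : HasExponents μ e) (T : Finset (Fin n))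
    (hT : 1 / 2 ≤ ∑ x ∈ T, μ x) : ∃ A ⊆ T, ∑ x ∈ A, μ x = 1 / 2 := by
  induction T using Finset.strongInduction with
  | H T ih =>
    rcases hT.eq_or_lt with hT | hT
    · exact ⟨T, subset_rfl, hT.symm⟩
    have hne : T.Nonempty := Finset.nonempty_of_sum_ne_zero (by linarith : 0 < ∑ x ∈ T, μ x).ne'
    obtain ⟨x, hx, hmax⟩ := T.exists_max_image e hne
    have hsum : ((∑ z ∈ T, 2 ^ (e x - e z) : ℕ) : ℝ) = 2 ^ e x * ∑ z ∈ T, μ z := by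
      rw [Finset.mul_sum]
      push_cast
      exact Finset.sum_congr rfl fun z hz => by rw [h.eq_inv, pow_sub₀ _ two_ne_zero (hmax z hz)]
    have hhalf : ((2 ^ (e x - 1) : ℕ) : ℝ) = 2 ^ e x * (1 / 2) := by
      push_cast
      rw [pow_sub₀ _ two_ne_zero (h.one_le x)]
      norm_num
    have hlt : 2 ^ (e x - 1) < ∑ z ∈ T, 2 ^ (e x - e z) := by
      rw [← Nat.cast_lt (α := ℝ), hsum, hhalf]
      gcongr
    have hle : ((2 ^ (e x - 1) : ℕ) : ℝ) + 1 ≤ ((∑ z ∈ T, 2 ^ (e x - e z) : ℕ) : ℝ) := by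
      exact_mod_cast hlt
    rw [hsum, hhalf, ← Finset.add_sum_erase T μ hx, mul_add, h.eq_inv x,
      mul_inv_cancel₀ (by positivity)] at hle
    obtain ⟨A, hA, hA₁⟩ := ih (T.erase x) (Finset.erase_ssubset hx)
      (le_of_mul_le_mul_left (by linarith) (show (0 : ℝ) < 2 ^ e x by positivity))
    exact ⟨A, hA.trans (Finset.erase_subset _ _), hA₁⟩

lemma HasExponents.two_rpow_le_rhoSpl_of_half_le (h : HasExponents μ e) {ε δ : ℝ}
    (hmod : IsModulusBinH δ ε) (hδ : δ ≤ 1) {T : Finset (Fin n)} (hT : 1 / 2 ≤ ∑ x ∈ T, μ x)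
    (hcard : #T ≤ δ * n) : 2 ^ (-ε * n) ≤ rhoSpl n μ := by
  have hn : (0 : ℝ) < n := Nat.cast_pos.2 h.pos
  obtain ⟨A, hAT, hA⟩ := h.exists_subset_sum_eq_half T hT
  have hsmall : (#A : ℝ) / n ≤ δ := by
    rw [div_le_iff₀ hn]
    exact (Nat.cast_le.2 (Finset.card_le_card hAT)).trans hcard
  have hAn : #A ≤ n := by simpa using A.card_le_univ
  have hbin : binH (#A / n) ≤ ε := by
    have hnonneg : (0 : ℝ) ≤ #A / n := by positivity
    have := hmod _ ⟨hnonneg, hsmall.trans hδ⟩ 0 (by simp) (by rwa [sub_zero, abs_of_nonneg hnonneg])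
    rw [binH_zero, sub_zero] at this
    exact (le_abs_self _).trans this
  have hratio := card_div_choose_le_rhoSpl (s := #A) h.sum_eq_one (Finset.singleton_nonempty A)
    (by simp) (by simpa using hA)
  refine le_trans ?_ hratio
  rw [Finset.card_singleton, Nat.cast_one, neg_mul, Real.rpow_neg zero_le_two, ← one_div]
  refine one_div_le_one_div_of_le (Nat.cast_pos.2 (Nat.choose_pos hAn))
    ((choose_le_two_rpow_mul_binH hAn).trans ?_)
  rw [mul_comm ε]
  gcongr
  exact one_le_two

end HalvingSets

section LevelWeight

variable {n : ℕ} {μ : Fin n → ℝ} {e : Fin n → ℕ}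

/-- The density of level `i`, where all levels from `M` on are collapsed into level `M` keeping
their mass: an atom `2 ^ (-(e x))` with `M < e x` counts as a `2 ^ (M - e x)`-fraction of an atom
`2 ^ (-M)`. -/
noncomputable def levelWeight (e : Fin n → ℕ) (M i : ℕ) : ℝ :=
  (∑ x with min (e x) M = i, (2 : ℝ) ^ i / 2 ^ e x) / n

lemma levelWeight_nonneg (e : Fin n → ℕ) (M i : ℕ) : 0 ≤ levelWeight e M i := by
  unfold levelWeight
  positivity

lemma levelWeight_of_lt {M i : ℕ} (hi : i < M) :
    levelWeight e M i = (#{x | e x = i} : ℝ) / n := by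
  have hlevel : ∀ x ∈ Finset.univ, min (e x) M = i ↔ e x = i := fun x _ => by omega
  rw [levelWeight, Finset.filter_congr hlevel, Finset.sum_congr rfl fun x hx => by
    rw [(Finset.mem_filter.1 hx).2, div_self (by positivity)], Finset.sum_const, nsmul_eq_mul,
    mul_one]

lemma levelWeight_self (M : ℕ) :
    levelWeight e M M = (∑ x with M ≤ e x, (2 : ℝ) ^ M / 2 ^ e x) / n := by
  simp only [levelWeight, min_eq_right_iff]

lemma levelWeight_of_gt {M i : ℕ} (hi : M < i) : levelWeight e M i = 0 := by
  rw [levelWeight, Finset.filter_false_of_mem fun x _ => by omega, Finset.sum_empty, zero_div]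

lemma sum_range_levelWeight_le_one (e : Fin n → ℕ) (M m : ℕ) :
    ∑ i ∈ Finset.range m, levelWeight e M i ≤ 1 := by
  unfold levelWeight
  rw [← Finset.sum_div]
  refine div_le_one_of_le₀ ?_ (Nat.cast_nonneg _)
  calc ∑ i ∈ Finset.range m, ∑ x with min (e x) M = i, (2 : ℝ) ^ i / 2 ^ e x
      ≤ ∑ i ∈ Finset.range m, ∑ x with min (e x) M = i, (1 : ℝ) := by
        refine Finset.sum_le_sum fun i _ => Finset.sum_le_sum fun x hx => ?_
        have := (Finset.mem_filter.1 hx).2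
        exact div_le_one_of_le₀ (pow_le_pow_right₀ one_le_two (by omega)) (by positivity)
    _ ≤ ∑ _x : Fin n, (1 : ℝ) :=
        Finset.sum_fiberwise_le_sum_of_sum_fiber_nonneg fun i _ => by positivity
    _ = n := by simp

lemma HasExponents.tsum_levelWeight_div (h : HasExponents μ e) (M : ℕ) :
    ∑' i, levelWeight e M i / 2 ^ i = 1 / n := by
  have hlevel : ∀ i, levelWeight e M i / 2 ^ i = (∑ x with min (e x) M = i, μ x) / n := by
    intro i
    rw [levelWeight, div_right_comm, Finset.sum_div]
    congr 1
    refine Finset.sum_congr rfl fun x _ => ?_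
    rw [h.eq_inv]
    field_simp
  rw [tsum_eq_sum (s := Finset.range (M + 1)) fun i hi => by
    rw [levelWeight_of_gt (by simpa using hi), zero_div]]
  simp_rw [hlevel]
  rw [← Finset.sum_div, Finset.sum_fiberwise_of_maps_to
    (fun x _ => Finset.mem_range.2 (Nat.lt_succ_of_le (min_le_right _ _))), h.sum_eq_one]

lemma HasExponents.memC_levelWeight (h : HasExponents μ e) {β : ℝ} {k : ℕ}
    (hn : (n : ℝ) = β * 2 ^ k) (M : ℕ) : memC β (levelWeight e M) k := by
  refine ⟨fun i => ⟨levelWeight_nonneg _ _ _, ?_⟩, hn ▸ h.tsum_levelWeight_div M,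
    sum_range_levelWeight_le_one e M⟩
  exact (Finset.single_le_sum (fun j _ => levelWeight_nonneg e M j)
    (Finset.self_mem_range_succ i)).trans (sum_range_levelWeight_le_one e M _)

lemma sum_Ico_ite_two_pow_div_le (k K e : ℕ) :
    ∑ M ∈ Finset.Ico k (k + K), (if M ≤ e then (2 : ℝ) ^ M / 2 ^ e else 0) ≤ 2 := by
  rw [← Finset.sum_filter]
  calc ∑ M ∈ Finset.Ico k (k + K) with M ≤ e, (2 : ℝ) ^ M / 2 ^ e
      ≤ ∑ M ∈ Finset.range (e + 1), (2 : ℝ) ^ M / 2 ^ e := by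
        refine Finset.sum_le_sum_of_subset_of_nonneg (fun M hM => ?_) fun _ _ _ => by positivity
        simp only [Finset.mem_filter, Finset.mem_range] at hM ⊢
        omega
    _ ≤ 2 := by
        rw [← Finset.sum_div, div_le_iff₀ (by positivity)]
        have := Nat.geomSum_lt (n := e + 1) le_rfl (s := Finset.range (e + 1))
          fun M hM => Finset.mem_range.1 hM
        rw [pow_succ, mul_comm] at this
        exact_mod_cast this.le

-- Averaging over `M`: each atom contributes at most `∑ 2 ^ (M - e x) ≤ 2` over all `M ≤ e x`.
lemma exists_levelWeight_self_le (e : Fin n → ℕ) (k : ℕ) {K : ℕ} (hK : 0 < K) :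
    ∃ M ∈ Finset.Ico k (k + K), levelWeight e M M ≤ 2 / K := by
  refine Finset.exists_le_of_sum_le (by simpa using hK) ?_
  have hsum : ∑ M ∈ Finset.Ico k (k + K), ∑ x with M ≤ e x, (2 : ℝ) ^ M / 2 ^ e x ≤ 2 * n := by
    simp_rw [Finset.sum_filter]
    rw [Finset.sum_comm]
    calc _ ≤ ∑ _x : Fin n, (2 : ℝ) :=
          Finset.sum_le_sum fun x _ => sum_Ico_ite_two_pow_div_le k K (e x)
      _ = 2 * n := by simp [mul_comm]
  simp_rw [levelWeight_self]
  rw [← Finset.sum_div, Finset.sum_const, Nat.card_Ico, Nat.add_sub_cancel_left, nsmul_eq_mul,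
    mul_div_cancel₀ _ (by positivity)]
  exact div_le_of_le_mul₀ (Nat.cast_nonneg _) zero_le_two hsum

/-- The levels in `[t, M)` that have at least `C` atoms. -/
def heavyLevels (e : Fin n → ℕ) (t M C : ℕ) : Finset ℕ :=
  {i ∈ Finset.Ico t M | C ≤ #{x | e x = i}}

lemma sum_light_levelWeight_mul_le {t M C m : ℕ} (hMt : M ≤ t + m) {f : ℕ → ℝ}
    (hf₀ : ∀ i, 0 ≤ f i) (hf : ∀ i, t ≤ i → f i ≤ f t) :
    ∑ i ∈ Finset.Ico t M with ¬ C ≤ #{x | e x = i}, levelWeight e M i * f i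
      ≤ m * C / n * f t := by
  calc _ ≤ ∑ i ∈ Finset.Ico t M with ¬ C ≤ #{x | e x = i}, (C / n * f t : ℝ) := by
        refine Finset.sum_le_sum fun i hi => ?_
        obtain ⟨hi, hlight⟩ := Finset.mem_filter.1 hi
        obtain ⟨hti, hiM⟩ := Finset.mem_Ico.1 hi
        rw [levelWeight_of_lt hiM]
        have hlight : (#{x | e x = i} : ℝ) ≤ C := Nat.cast_le.2 (not_le.1 hlight).le
        exact mul_le_mul (by gcongr) (hf i hti) (hf₀ i) (by positivity)
    _ ≤ m * (C / n * f t) := by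
        rw [Finset.sum_const, nsmul_eq_mul]
        refine mul_le_mul_of_nonneg_right ?_ (mul_nonneg (by positivity) (hf₀ t))
        have := Finset.card_filter_le (Finset.Ico t M) fun i => ¬ C ≤ #{x | e x = i}
        rw [Nat.card_Ico] at this
        exact_mod_cast (by omega)
    _ = _ := by ring

lemma tsum_levelWeight_mul_le {t M C m : ℕ} (htM : t ≤ M) (hMt : M ≤ t + m)
    {f : ℕ → ℝ} (hf₀ : ∀ i, 0 ≤ f i) (hf : ∀ i, t ≤ i → f i ≤ f t) :
    ∑' i, levelWeight e M i * f i ≤ (∑ x with e x < t, f (e x)) / n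
      + ∑ i ∈ heavyLevels e t M C, levelWeight e M i * f i + m * C / n * f t
      + levelWeight e M M * f M := by
  have hlow : ∑ i ∈ Finset.range t, levelWeight e M i * f i = (∑ x with e x < t, f (e x)) / n := by
    rw [sum_filter_lt_eq_sum_range, Finset.sum_div]
    refine Finset.sum_congr rfl fun i hi => ?_
    rw [levelWeight_of_lt ((Finset.mem_range.1 hi).trans_le htM), div_mul_eq_mul_div]
  have hlight := sum_light_levelWeight_mul_le (e := e) (C := C) hMt hf₀ hf
  rw [tsum_eq_sum (s := Finset.range (M + 1)) fun i hi => by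
    rw [levelWeight_of_gt (by simpa using hi), zero_mul], Finset.sum_range_succ,
    ← Finset.sum_range_add_sum_Ico _ htM, hlow, ← Finset.sum_filter_add_sum_filter_not
      (Finset.Ico t M) fun i => C ≤ #{x | e x = i}]
  unfold heavyLevels
  linarith

lemma HasExponents.card_filter_lt_le_two_pow (h : HasExponents μ e) (t : ℕ) :
    (#{x | e x < t} : ℝ) ≤ 2 ^ t := by
  have hmass : ∑ x with e x < t, ((2 : ℝ) ^ t)⁻¹ ≤ 1 := by
    calc ∑ x with e x < t, ((2 : ℝ) ^ t)⁻¹ ≤ ∑ x with e x < t, μ x := by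
          refine Finset.sum_le_sum fun x hx => ?_
          rw [h.eq_inv]
          exact inv_anti₀ (by positivity)
            (pow_le_pow_right₀ one_le_two (Finset.mem_filter.1 hx).2.le)
      _ ≤ ∑ x, μ x := Finset.sum_le_sum_of_subset_of_nonneg (Finset.filter_subset _ _)
          fun x _ _ => h.nonneg x
      _ = 1 := h.sum_eq_one
  rwa [Finset.sum_const, nsmul_eq_mul, ← div_eq_mul_inv, div_le_one (by positivity)] at hmass

end LevelWeight

section HeavyWindow

variable {n : ℕ} {μ : Fin n → ℝ} {e : Fin n → ℕ}

/-- `G` is a set of levels in the window `[t, t + m)`, each with many atoms, that together with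
the levels below `t` carries almost all of the mass of `μ`, and on its own almost all of the
weight of the sequence `c`, which agrees on `G` with the level densities of `μ`. -/
structure IsHeavyWindow (μ : Fin n → ℝ) (e : Fin n → ℕ) (c : ℕ → ℝ) (t m : ℕ) (G : Finset ℕ)
    (η : ℝ) : Prop where
  one_le : 1 ≤ t
  mem_window : ∀ i ∈ G, t ≤ i ∧ i < t + m
  weight_eq : ∀ i ∈ G, c i = (#{x | e x = i} : ℝ) / n
  heavy : ∀ i ∈ G, (4 * (m * 2 ^ m) : ℝ) ≤ #{x | e x = i} * η
  card_low_le : #{x | e x < t} ≤ η * n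
  tsum_le : ∑' i, c i ≤ ∑ i ∈ G, c i + η
  mass_le : 1 / (n : ℝ)
    ≤ (∑ x with e x < t, μ x) / n + ∑ i ∈ G, c i / 2 ^ i + η / 4 * (1 / n)

lemma HasExponents.isHeavyWindow (h : HasExponents μ e) {t M m C : ℕ} {η : ℝ} (hη₀ : 0 ≤ η)
    (hη₁ : η ≤ 1) (ht : 1 ≤ t) (htM : t ≤ M) (hMt : M ≤ t + m) (hlow : (2 : ℝ) ^ t ≤ η / 2 * n)
    (hresid : levelWeight e M M ≤ η / 4) (hresid' : levelWeight e M M * n ≤ η / 8 * 2 ^ M)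
    (hheavy : 4 * (m * 2 ^ m) ≤ C * η) (hlight : (m : ℝ) * C ≤ η / 8 * 2 ^ t) :
    IsHeavyWindow μ e (levelWeight e M) t m (heavyLevels e t M C) η where
  one_le := ht
  mem_window i hi := by
    have := Finset.mem_Ico.1 (Finset.mem_filter.1 hi).1
    omega
  weight_eq i hi := levelWeight_of_lt (Finset.mem_Ico.1 (Finset.mem_filter.1 hi).1).2
  heavy i hi := by
    refine hheavy.trans ?_
    have := (Finset.mem_filter.1 hi).2
    gcongr
  card_low_le := (h.card_filter_lt_le_two_pow t).trans
    (hlow.trans (by gcongr; linarith))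
  tsum_le := by
    have hn : (0 : ℝ) < n := Nat.cast_pos.2 h.pos
    have hsum := tsum_levelWeight_mul_le (e := e) (C := C) htM hMt (f := fun _ => 1)
      (by simp) (by simp)
    have hcard : (#{x | e x < t} : ℝ) / n ≤ η / 2 :=
      (div_le_iff₀ hn).2 ((h.card_filter_lt_le_two_pow t).trans hlow)
    have hlight' : (m : ℝ) * C / n ≤ η / 8 * (η / 2) := by
      rw [div_le_iff₀ hn, mul_assoc]
      exact hlight.trans (by gcongr)
    simp only [mul_one, Finset.sum_const, nsmul_eq_mul] at hsum
    nlinarith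
  mass_le := by
    have hn : (0 : ℝ) < n := Nat.cast_pos.2 h.pos
    have hsum := tsum_levelWeight_mul_le (e := e) (C := C) htM hMt
      (f := fun i => ((2 : ℝ) ^ i)⁻¹) (fun i => by positivity)
      fun i hi => inv_anti₀ (by positivity) (pow_le_pow_right₀ one_le_two hi)
    simp only [← div_eq_mul_inv, ← h.eq_inv, h.tsum_levelWeight_div] at hsum
    have hlight' : (m : ℝ) * C / n / 2 ^ t ≤ η / 8 * (1 / n) := by
      rw [div_right_comm, div_le_iff₀ hn, mul_assoc, one_div_mul_cancel hn.ne', mul_one]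
      exact (div_le_iff₀ (by positivity)).2 hlight
    have hresid'' : levelWeight e M M / 2 ^ M ≤ η / 8 * (1 / n) := by
      rw [mul_one_div, div_le_div_iff₀ (by positivity) hn]
      exact hresid'
    linarith

lemma exists_heavyWindow {β : ℝ} (hβ : 0 < β) {η : ℝ} (hη : η ∈ Set.Ioc (0 : ℝ) 1) :
    ∃ m K : ℕ, ∀ k, K ≤ k → ∀ n : ℕ, (n : ℝ) = β * 2 ^ k → ∀ (μ : Fin n → ℝ) (e : Fin n → ℕ),
      HasExponents μ e → ∃ c t G, memC β c k ∧ IsHeavyWindow μ e c t m G η := by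
  have hη₀ := hη.1
  obtain ⟨j, hj⟩ := pow_unbounded_of_one_lt (2 / (η * β)) (one_lt_two (α := ℝ))
  obtain ⟨w, hw⟩ := exists_nat_gt (8 / η + 16 * β / η)
  have hw₀ : (0 : ℝ) < w := lt_trans (by positivity) hw
  rw [← add_div, div_lt_iff₀ hη₀] at hw
  obtain ⟨C, hC⟩ := exists_nat_gt (4 * ((w + j : ℕ) * 2 ^ (w + j)) / η)
  obtain ⟨t₀, ht₀⟩ := pow_unbounded_of_one_lt ((w + j : ℕ) * C / (η / 8)) (one_lt_two (α := ℝ))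
  refine ⟨w + j, t₀ + 1 + j, fun k hk n hn μ e h => ?_⟩
  obtain ⟨t, rfl⟩ : ∃ t, k = t + j := ⟨k - j, by omega⟩
  obtain ⟨M, hM, hresid⟩ := exists_levelWeight_self_le e (t + j) (Nat.cast_pos.1 hw₀)
  rw [Finset.mem_Ico] at hM
  refine ⟨levelWeight e M, t, heavyLevels e t M C, h.memC_levelWeight hn M, ?_⟩
  refine h.isHeavyWindow hη₀.le hη.2 (by omega) (by omega) (by omega) ?_ ?_ ?_ ?_ ?_
  · rw [div_lt_iff₀ (by positivity)] at hj
    rw [hn, pow_add]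
    have : (0 : ℝ) < 2 ^ t := by positivity
    nlinarith
  · refine hresid.trans ?_
    rw [div_le_iff₀ hw₀]
    linarith
  · have hM' : (2 : ℝ) ^ (t + j) ≤ 2 ^ M := pow_le_pow_right₀ one_le_two hM.1
    have hβw : 2 / w * β ≤ η / 8 := by
      rw [div_mul_eq_mul_div, div_le_iff₀ hw₀]
      linarith
    calc levelWeight e M M * n ≤ 2 / w * (β * 2 ^ (t + j)) := by rw [hn]; gcongr
      _ = 2 / w * β * 2 ^ (t + j) := (mul_assoc _ _ _).symm
      _ ≤ η / 8 * 2 ^ M := by gcongr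
  · exact ((div_lt_iff₀ hη₀).1 hC).le
  · rw [div_lt_iff₀ (by positivity)] at ht₀
    refine ht₀.le.trans ?_
    rw [mul_comm]
    gcongr
    exacts [one_le_two, by omega]

end HeavyWindow

section Proportions

variable {β : ℝ} {b : ℕ} {c α : ℕ → ℝ} {G : Finset ℕ}

lemma memC.sum_mul_le_tsum_mul (h : memC β c b) {f : ℕ → ℝ} (hf : ∀ i, f i ∈ Set.Icc (0 : ℝ) 1) :
    ∑ i ∈ G, c i * f i ≤ ∑' i, f i * c i := by
  simp_rw [mul_comm (c _)]
  exact (h.summable_mul hf).sum_le_tsum G fun i _ => mul_nonneg (hf i).1 (h.nonneg i)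

lemma memC.tsum_mul_le (h : memC β c b) {f : ℕ → ℝ} (hf : ∀ i, f i ∈ Set.Icc (0 : ℝ) 1) {η : ℝ}
    (htail : ∑' i, c i ≤ ∑ i ∈ G, c i + η) : ∑' i, f i * c i ≤ ∑ i ∈ G, c i * f i + η := by
  have hcompl := h.sum_mul_le_tsum_mul (G := G) fun i => Set.Icc.one_sub_mem (hf i)
  simp only [mul_sub, sub_mul, mul_one, one_mul, Finset.sum_sub_distrib] at hcompl
  rw [h.summable.tsum_sub (h.summable_mul hf)] at hcompl
  linarith

lemma memC.Pfun_le_entropyGap_add (h : memC β c b) (hα : ∀ i, α i ∈ Set.Icc (0 : ℝ) 1)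
    {ε η : ℝ} (hmod : IsModulusBinH η ε) (htail : ∑' i, c i ≤ ∑ i ∈ G, c i + η) :
    Pfun c α ≤ entropyGap G c α + η + ε := by
  have hent := h.tsum_mul_le (fun i => binH_mem_Icc (hα i)) htail
  have hmean := h.tsum_mul_le hα htail
  have hmean' := h.sum_mul_le_tsum_mul (G := G) hα
  have hbin := hmod _ (sum_mul_mem_Icc (fun i _ => h.nonneg i) (h.sum_le_one G) fun i _ => hα i)
    _ (h.tsum_mul_mem_Icc hα) (abs_le.2 ⟨by linarith, by linarith⟩)
  unfold Pfun entropyGap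
  linarith [(abs_le.1 hbin).2]

lemma memC.sum_sub_half_le_sum_mul (h : memC β c b) (hα : memA β b c α) :
    ∑ i ∈ G, c i / 2 ^ i - 1 / (β * 2 ^ b) / 2 ≤ ∑ i ∈ G, α i * (c i / 2 ^ i) := by
  have hhalf : ∑' i, α i * c i / 2 ^ i = 1 / (β * 2 ^ b) / 2 := by
    rw [hα.2, pow_succ, div_div, mul_assoc]
  have hf := fun i => Set.Icc.one_sub_mem (hα.1 i)
  have hcompl := (h.summable_mul_div hf).sum_le_tsum G
    fun i _ => div_nonneg (mul_nonneg (hf i).1 (h.nonneg i)) (by positivity)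
  simp only [sub_mul, one_mul, sub_div, Finset.sum_sub_distrib] at hcompl
  rw [h.summable_div.tsum_sub (h.summable_mul_div hα.1), hhalf, h.2.1] at hcompl
  simp_rw [mul_div_assoc] at hcompl
  linarith

-- Pull `α` towards `3 / 4` to keep it away from one, then scale it down to the prescribed mass.
lemma memC.exists_proportions (h : memC β c b) (hα : memA β b c α) {ε η : ℝ}
    (hη : η ∈ Set.Ioc (0 : ℝ) 1) (hε : 0 ≤ ε) (hmod : IsModulusBinH η ε)
    (htail : ∑' i, c i ≤ ∑ i ∈ G, c i + η) {r : ℝ} (hr₀ : 0 < r)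
    (hr : r ≤ 1 / (β * 2 ^ b) / 2)
    (hmass : 1 / (β * 2 ^ b) / 2 + r ≤ ∑ i ∈ G, c i / 2 ^ i + η / 4 * (1 / (β * 2 ^ b))) :
    ∃ α' : ℕ → ℝ, (∀ i, 0 ≤ α' i ∧ α' i ≤ 1 - η / 4) ∧ ∑ i ∈ G, α' i * (c i / 2 ^ i) = r ∧
      Pfun c α - η - 3 * ε ≤ entropyGap G c α' := by
  obtain ⟨hη₀, hη₁⟩ := hη
  set W := 1 / (β * 2 ^ b)
  let α₁ : ℕ → ℝ := fun i => (1 - η) * α i + η * (3 / 4)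
  have hα₁ : ∀ i, 0 ≤ α₁ i ∧ α₁ i ≤ 1 - η / 4 := fun i => by
    obtain ⟨hαi₀, hαi₁⟩ := hα.1 i
    simp only [α₁]
    constructor <;> nlinarith
  have hα₁_mem : ∀ i ∈ G, α₁ i ∈ Set.Icc (0 : ℝ) 1 := fun i _ =>
    ⟨(hα₁ i).1, by linarith [(hα₁ i).2]⟩
  have hclose : ∀ i ∈ G, |α i - α₁ i| ≤ η := fun i _ => by
    obtain ⟨hαi₀, hαi₁⟩ := hα.1 i
    simp only [α₁, abs_le]
    constructor <;> nlinarith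
  set a := ∑ i ∈ G, α₁ i * (c i / 2 ^ i) with ha
  have ha' : a = (1 - η) * ∑ i ∈ G, α i * (c i / 2 ^ i) + η * (3 / 4) * ∑ i ∈ G, c i / 2 ^ i := by
    simp only [ha, α₁, add_mul, Finset.sum_add_distrib, Finset.mul_sum, mul_assoc]
  have hra : r ≤ a := by
    have := mul_le_mul_of_nonneg_left (h.sum_sub_half_le_sum_mul hα (G := G)) (sub_nonneg.2 hη₁)
    have hWr : 0 ≤ W := by linarith
    nlinarith [mul_nonneg hη₀.le hWr, mul_nonneg (mul_nonneg hη₀.le hη₀.le) hWr]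
  have ha₀ : 0 < a := hr₀.trans_le hra
  have hs : r / a ∈ Set.Icc (0 : ℝ) 1 := ⟨by positivity, (div_le_one ha₀).2 hra⟩
  have hc : ∀ i ∈ G, 0 ≤ c i := fun i _ => h.nonneg i
  refine ⟨fun i => r / a * α₁ i, fun i => ⟨mul_nonneg hs.1 (hα₁ i).1,
    (mul_le_of_le_one_left (hα₁ i).1 hs.2).trans (hα₁ i).2⟩, ?_, ?_⟩
  · simp_rw [mul_assoc]
    rw [← Finset.mul_sum, ← ha, div_mul_cancel₀ _ ha₀.ne']
  · have hrestrict := h.Pfun_le_entropyGap_add hα.1 hmod htail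
    have hpull := entropyGap_le_add_of_forall_abs_sub_le hη₀.le hε hmod hc (h.sum_le_one G)
      (fun i _ => hα.1 i) hα₁_mem hclose
    have hscale := entropyGap_le_entropyGap_mul hs hc (h.sum_le_one G) hα₁_mem
    linarith

end Proportions

section MassRounding

variable {G : Finset ℕ} {t m L : ℕ} {x : ℕ → ℝ} {z : ℤ}

lemma sum_mul_two_pow_sub (hG : ∀ i ∈ G, i ≤ L) (f : ℕ → ℝ) :
    ∑ i ∈ G, f i * 2 ^ (L - i) = 2 ^ L * ∑ i ∈ G, f i / 2 ^ i := by
  rw [Finset.mul_sum]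
  refine Finset.sum_congr rfl fun i hi => ?_
  rw [pow_sub₀ _ two_ne_zero (hG i hi)]
  ring

lemma sub_natFloor_mem_Icc {a : ℝ} (ha : 0 ≤ a) : a - ⌊a⌋₊ ∈ Set.Icc (0 : ℝ) 1 :=
  ⟨sub_nonneg.2 (Nat.floor_le ha), by linarith [Nat.lt_floor_add_one a]⟩

lemma sum_sub_natFloor_mul_two_pow_mem_Icc (hG : ∀ i ∈ G, t ≤ i ∧ i < t + m) (hL : L < t + m)
    (hx : ∀ i ∈ G, 0 ≤ x i) :
    ∑ i ∈ G, (x i - ⌊x i⌋₊) * 2 ^ (L - i) ∈ Set.Icc (0 : ℝ) (m * 2 ^ m) := by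
  refine ⟨Finset.sum_nonneg fun i hi =>
    mul_nonneg (sub_natFloor_mem_Icc (hx i hi)).1 (by positivity), ?_⟩
  have hcard : #G ≤ m := by
    have hsub : G ⊆ Finset.Ico t (t + m) := fun i hi => Finset.mem_Ico.2 (hG i hi)
    simpa using Finset.card_le_card hsub
  calc ∑ i ∈ G, (x i - ⌊x i⌋₊) * 2 ^ (L - i) ≤ ∑ i ∈ G, 1 * (2 : ℝ) ^ m := by
        refine Finset.sum_le_sum fun i hi => ?_
        have hti := hG i hi
        gcongr
        exacts [(sub_natFloor_mem_Icc (hx i hi)).2, one_le_two, by omega]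
    _ = #G * 2 ^ m := by rw [one_mul, Finset.sum_const, nsmul_eq_mul]
    _ ≤ m * 2 ^ m := by gcongr

lemma exists_int_eq_add_sum_sub_natFloor (htL : t ≤ L) (hG : ∀ i ∈ G, i ≤ L)
    (hz : x L / 2 ^ L + ∑ i ∈ G, x i / 2 ^ i = z / 2 ^ t) :
    ∃ Y : ℤ, (Y : ℝ) = x L + ∑ i ∈ G, (x i - ⌊x i⌋₊) * 2 ^ (L - i) := by
  refine ⟨z * 2 ^ (L - t) - ∑ i ∈ G, (⌊x i⌋₊ : ℤ) * 2 ^ (L - i), ?_⟩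
  simp only [sub_mul, Finset.sum_sub_distrib, Int.cast_sub, Int.cast_sum, Int.cast_mul,
    Int.cast_pow, Int.cast_ofNat, Int.cast_natCast]
  rw [sum_mul_two_pow_sub hG x, ← sub_eq_of_eq_add' hz.symm, pow_sub₀ _ two_ne_zero htL]
  field_simp
  ring

-- Round every `x i` down except at the largest index `L`, where the count is then forced; it is an
-- integer because `2 ^ L` clears all denominators.
lemma exists_nat_rounding (hG : ∀ i ∈ G, t ≤ i ∧ i < t + m) (hx : ∀ i ∈ G, 0 ≤ x i)
    (hz : ∑ i ∈ G, x i / 2 ^ i = z / 2 ^ t) :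
    ∃ y : ℕ → ℕ, (∀ i ∈ G, |(y i : ℝ) - x i| ≤ m * 2 ^ m) ∧
      ∑ i ∈ G, (y i : ℝ) / 2 ^ i = ∑ i ∈ G, x i / 2 ^ i := by
  rcases G.eq_empty_or_nonempty with rfl | hne
  · exact ⟨0, by simp⟩
  obtain ⟨L, hL, hmax⟩ := G.exists_max_image id hne
  obtain ⟨htL, hLt⟩ := hG L hL
  have hsub : ∀ i ∈ G.erase L, i ∈ G := fun _ => Finset.mem_of_mem_erase
  have hle : ∀ i ∈ G.erase L, i ≤ L := fun i hi => hmax i (hsub i hi)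
  rw [← Finset.add_sum_erase _ _ hL] at hz ⊢
  obtain ⟨hΔ₀, hΔ₁⟩ := sum_sub_natFloor_mul_two_pow_mem_Icc
    (fun i hi => hG i (hsub i hi)) hLt fun i hi => hx i (hsub i hi)
  obtain ⟨Y, hY⟩ := exists_int_eq_add_sum_sub_natFloor htL hle hz
  lift Y to ℕ using by exact_mod_cast hY ▸ add_nonneg (hx L hL) hΔ₀
  rw [Int.cast_natCast] at hY
  refine ⟨Function.update (fun i => ⌊x i⌋₊) L Y, fun i hi => ?_, ?_⟩
  · rcases eq_or_ne i L with rfl | hiL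
    · rwa [Function.update_self, hY, add_sub_cancel_left, abs_of_nonneg hΔ₀]
    · have hm : (1 : ℝ) ≤ m * 2 ^ m := one_le_mul_of_one_le_of_one_le
        (by exact_mod_cast (show 1 ≤ m by omega)) (one_le_pow₀ one_le_two)
      obtain ⟨hfloor₀, hfloor₁⟩ := sub_natFloor_mem_Icc (hx i hi)
      rw [Function.update_of_ne hiL, abs_sub_comm, abs_of_nonneg hfloor₀]
      exact hfloor₁.trans hm
  · rw [← Finset.add_sum_erase _ _ hL,
      Finset.sum_congr rfl fun i hi => by rw [Function.update_of_ne (Finset.ne_of_mem_erase hi)],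
      Function.update_self, hY, sum_mul_two_pow_sub hle]
    simp only [sub_div, Finset.sum_sub_distrib]
    field_simp
    ring

lemma exists_nat_rounding_of_proportions (hG : ∀ i ∈ G, t ≤ i ∧ i < t + m) {N : ℕ → ℕ}
    {α : ℕ → ℝ} {η : ℝ} (hα : ∀ i, 0 ≤ α i ∧ α i ≤ 1 - η / 4)
    (hN : ∀ i ∈ G, (4 * (m * 2 ^ m) : ℝ) ≤ N i * η)
    (hz : ∑ i ∈ G, α i * N i / 2 ^ i = z / 2 ^ t) :
    ∃ y : ℕ → ℕ, (∀ i ∈ G, y i ≤ N i) ∧ (∀ i ∈ G, |α i - (y i : ℝ) / N i| ≤ η) ∧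
      ∑ i ∈ G, (y i : ℝ) / 2 ^ i = ∑ i ∈ G, α i * N i / 2 ^ i := by
  obtain ⟨y, hy, hsum⟩ := exists_nat_rounding hG
    (fun i _ => mul_nonneg (hα i).1 (Nat.cast_nonneg _)) hz
  refine ⟨y, fun i hi => ?_, fun i hi => ?_, hsum⟩
  · have hle : (y i : ℝ) ≤ N i := by
      have := mul_le_mul_of_nonneg_right (hα i).2 (Nat.cast_nonneg (α := ℝ) (N i))
      linarith [(abs_le.1 (hy i hi)).2, hN i hi]
    exact_mod_cast hle
  · have hm : (0 : ℝ) < m := by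
      have := hG i hi
      exact_mod_cast (show 0 < m by omega)
    have hpos : (0 : ℝ) < N i := by
      refine (Nat.cast_nonneg _).lt_of_ne' fun h₀ => ?_
      have := hN i hi
      rw [h₀, zero_mul] at this
      exact absurd this (not_le.2 (by positivity))
    rw [abs_sub_comm, div_sub' hpos.ne', abs_div, abs_of_pos hpos, div_le_iff₀ hpos,
      mul_comm (N i : ℝ)]
    have hm' : (0 : ℝ) ≤ m * 2 ^ m := by positivity
    linarith [hy i hi, hN i hi]

end MassRounding

/-- The level counts of a set that takes all `N i` atoms of every level `i < t`, `y i` atoms of each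
level `i ∈ G`, and nothing else. -/
def lowFullCount (t : ℕ) (G : Finset ℕ) (N y : ℕ → ℕ) (i : ℕ) : ℕ :=
  if i < t then N i else if i ∈ G then y i else 0

section LowFullCount

variable {t i : ℕ} {G : Finset ℕ} {N y : ℕ → ℕ}

lemma lowFullCount_of_lt (hi : i < t) : lowFullCount t G N y i = N i := if_pos hi

lemma lowFullCount_of_mem (hG : ∀ i ∈ G, t ≤ i) (hi : i ∈ G) : lowFullCount t G N y i = y i := by
  rw [lowFullCount, if_neg (not_lt.2 (hG i hi)), if_pos hi]

lemma lowFullCount_of_le_of_notMem (hti : t ≤ i) (hi : i ∉ G) : lowFullCount t G N y i = 0 := by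
  rw [lowFullCount, if_neg (not_lt.2 hti), if_neg hi]

lemma lowFullCount_le (hy : ∀ i ∈ G, y i ≤ N i) (i : ℕ) : lowFullCount t G N y i ≤ N i := by
  unfold lowFullCount
  split_ifs with hit hiG
  exacts [le_rfl, hy i hiG, Nat.zero_le _]

lemma sum_lowFullCount_mul (hG : ∀ i ∈ G, t ≤ i) {s : Finset ℕ} (hts : Finset.range t ⊆ s)
    (hGs : G ⊆ s) (f : ℕ → ℝ) :
    ∑ i ∈ s, lowFullCount t G N y i * f i
      = ∑ i ∈ Finset.range t, N i * f i + ∑ i ∈ G, y i * f i := by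
  have hdisj : Disjoint (Finset.range t) G :=
    Finset.disjoint_left.2 fun i hi hiG => absurd (Finset.mem_range.1 hi) (not_lt.2 (hG i hiG))
  have hzero : ∀ i ∈ s, i ∉ Finset.range t ∪ G → lowFullCount t G N y i * f i = 0 :=
    fun i _ hi => by
      simp only [Finset.mem_union, Finset.mem_range, not_or, not_lt] at hi
      rw [lowFullCount_of_le_of_notMem hi.1 hi.2, Nat.cast_zero, zero_mul]
  rw [← Finset.sum_subset (Finset.union_subset hts hGs) hzero, Finset.sum_union hdisj]
  congr 1
  · exact Finset.sum_congr rfl fun i hi => by rw [lowFullCount_of_lt (Finset.mem_range.1 hi)]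
  · exact Finset.sum_congr rfl fun i hi => by rw [lowFullCount_of_mem hG hi]

lemma entropyGap_le_entropyGap_lowFullCount_add (hG : ∀ i ∈ G, t ≤ i) {s : Finset ℕ}
    (hts : Finset.range t ⊆ s) (hGs : G ⊆ s) (hy : ∀ i ∈ G, y i ≤ N i) {n : ℕ}
    (hN : ∑ i ∈ s, (N i : ℝ) / n ≤ 1) {η ε : ℝ} (hmod : IsModulusBinH η ε)
    (hlow : ∑ i ∈ Finset.range t, (N i : ℝ) / n ≤ η) :
    entropyGap G (fun i => (N i : ℝ) / n) (fun i => (y i : ℝ) / N i)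
      ≤ entropyGap s (fun i => (N i : ℝ) / n) (fun i => (lowFullCount t G N y i : ℝ) / N i)
        + ε := by
  rw [entropyGap_congr (fun _ _ => rfl) fun i hi => by
    rw [← lowFullCount_of_mem (N := N) (y := y) hG hi]]
  refine entropyGap_le_add_of_subset hmod hGs (fun i _ => by positivity) hN
    (fun i _ => ⟨by positivity, div_le_one_of_le₀
      (Nat.cast_le.2 (lowFullCount_le hy i)) (Nat.cast_nonneg _)⟩) ?_
  have hsum := sum_lowFullCount_mul (N := N) (y := y) hG hts hGs fun _ => 1 / n
  rw [← Finset.sum_sdiff hGs,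
    Finset.sum_congr (s₁ := G) rfl fun i hi => by rw [lowFullCount_of_mem hG hi],
    add_left_inj] at hsum
  simp only [mul_one_div] at hsum
  refine le_trans (Finset.sum_le_sum fun i _ => ?_) (hsum.trans_le hlow)
  rw [div_mul_div_comm, mul_comm (n : ℝ), ← div_mul_div_comm]
  exact mul_le_of_le_one_left (by positivity) (div_self_le_one _)

end LowFullCount

section LowerBound

variable {n : ℕ} {μ : Fin n → ℝ} {e : Fin n → ℕ} {G : Finset ℕ} {t : ℕ} {η ε : ℝ}

lemma HasExponents.sum_filter_lt_eq (h : HasExponents μ e) (t : ℕ) :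
    ∑ x with e x < t, μ x = ∑ i ∈ Finset.range t, #{x | e x = i} * ((2 : ℝ) ^ i)⁻¹ := by
  rw [← sum_filter_lt_eq_sum_range]
  exact Finset.sum_congr rfl fun x _ => h.eq_inv x

lemma HasExponents.exists_int_half_sub_sum_eq (h : HasExponents μ e) (ht : 1 ≤ t) :
    ∃ z : ℤ, 1 / 2 - ∑ x with e x < t, μ x = z / 2 ^ t := by
  refine ⟨2 ^ (t - 1) - ∑ x with e x < t, 2 ^ (t - e x), ?_⟩
  push_cast
  rw [sub_div, Finset.sum_div]
  congr 1
  · rw [pow_sub₀ _ two_ne_zero ht]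
    field_simp
  · refine Finset.sum_congr rfl fun x hx => ?_
    rw [h.eq_inv, pow_sub₀ _ two_ne_zero (Finset.mem_filter.1 hx).2.le]
    field_simp

-- A halving set may take every atom below level `t` at no combinatorial cost; those atoms are few,
-- so they barely change the entropy gap.
lemma HasExponents.two_rpow_mul_entropyGap_sub_le (h : HasExponents μ e)
    (hmod : IsModulusBinH η ε) (hlow : #{x | e x < t} ≤ η * n) (hG : ∀ i ∈ G, t ≤ i) {y : ℕ → ℕ}
    (hy : ∀ i ∈ G, y i ≤ #{x | e x = i})
    (hmass : ∑ i ∈ G, (y i : ℝ) / 2 ^ i = 1 / 2 - ∑ x with e x < t, μ x) :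
    2 ^ (n * (entropyGap G (fun i => (#{x | e x = i} : ℝ) / n)
        (fun i => (y i : ℝ) / #{x | e x = i}) - ε)) ≤ ((n : ℝ) + 1) ^ #G * rhoSpl n μ := by
  have hn : (0 : ℝ) < n := Nat.cast_pos.2 h.pos
  set N : ℕ → ℕ := fun i => #{x | e x = i}
  obtain ⟨R, hR⟩ := (Finset.range t ∪ G ∪ Finset.univ.image e).exists_nat_subset_range
  obtain ⟨⟨htR, hGR⟩, heR⟩ := by simpa only [Finset.union_subset_iff] using hR
  have heR : ∀ x, e x < R := fun x =>
    Finset.mem_range.1 (heR (Finset.mem_image_of_mem e (Finset.mem_univ x)))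
  have hsumN : ∑ i ∈ Finset.range R, (N i : ℝ) / n ≤ 1 := by
    rw [← Finset.sum_div, ← Nat.cast_sum, sum_range_card_fiber_eq heR]
    exact div_self_le_one _
  have hlowN : ∑ i ∈ Finset.range t, (N i : ℝ) / n ≤ η := by
    rw [← Finset.sum_div, div_le_iff₀ hn]
    have := sum_filter_lt_eq_sum_range e t fun _ => 1
    simp only [mul_one, Finset.sum_const, nsmul_eq_mul] at this
    exact this.symm.trans_le hlow
  refine le_trans ?_ (h.two_rpow_mul_entropyGap_le heR (G := G)
    (fun i _ => lowFullCount_le (t := t) hy i) ?_ hGR fun i _ hi => ?_)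
  · gcongr
    · exact one_le_two
    · exact sub_le_iff_le_add.2
        (entropyGap_le_entropyGap_lowFullCount_add hG htR hGR hy hsumN hmod hlowN)
  · rw [sum_lowFullCount_mul hG htR hGR, ← h.sum_filter_lt_eq]
    simp only [← div_eq_mul_inv]
    rw [hmass, add_sub_cancel]
  · rcases lt_or_ge i t with hit | hti
    exacts [.inr (lowFullCount_of_lt hit), .inl (lowFullCount_of_le_of_notMem hti hi)]

-- The weights of `G` and the atoms below level `t` together have mass nearly one, so proportions
-- that complete the low atoms to mass one half can be read off from a near-optimal `α`.
lemma IsHeavyWindow.exists_counts {β : ℝ} {k m : ℕ} {c : ℕ → ℝ} (hW : IsHeavyWindow μ e c t m G η)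
    (h : HasExponents μ e) (hc : memC β c k) (hn : (n : ℝ) = β * 2 ^ k)
    (hη : η ∈ Set.Ioc (0 : ℝ) 1) (hηε : η ≤ ε) (hmod : IsModulusBinH η ε)
    (hp : ∑ x with e x < t, μ x < 1 / 2) :
    ∃ y : ℕ → ℕ, (∀ i ∈ G, y i ≤ #{x | e x = i}) ∧
      ∑ i ∈ G, (y i : ℝ) / 2 ^ i = 1 / 2 - ∑ x with e x < t, μ x ∧
      Gfun β - 7 * ε ≤ entropyGap G (fun i => (#{x | e x = i} : ℝ) / n)
        fun i => (y i : ℝ) / #{x | e x = i} := by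
  have hε : 0 < ε := hη.1.trans_le hηε
  have hn₀ : (0 : ℝ) < n := Nat.cast_pos.2 h.pos
  obtain ⟨α, hα, hGα⟩ := hc.exists_Gfun_sub_lt_Pfun hε
  have hmass := hW.mass_le
  set p := ∑ x with e x < t, μ x
  have hp₀ : 0 ≤ p := Finset.sum_nonneg fun x _ => h.nonneg x
  obtain ⟨α', hα', hsum, hgap⟩ := hc.exists_proportions hα hη hε.le hmod hW.tsum_le
    (r := (1 / 2 - p) / n) (div_pos (sub_pos.2 hp) hn₀)
    (by rw [← hn, div_right_comm]; gcongr; linarith)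
    (by rw [← hn, sub_div, div_right_comm, ← add_sub_assoc, ← add_div, add_halves]; linarith)
  obtain ⟨z, hz⟩ := h.exists_int_half_sub_sum_eq hW.one_le
  have hsum' : ∑ i ∈ G, α' i * #{x | e x = i} / 2 ^ i = 1 / 2 - p := by
    rw [eq_div_iff hn₀.ne', Finset.sum_mul] at hsum
    rw [← hsum]
    refine Finset.sum_congr rfl fun i hi => ?_
    rw [hW.weight_eq i hi]
    field_simp
  obtain ⟨y, hyN, hyα, hy⟩ :=
    exists_nat_rounding_of_proportions hW.mem_window hα' hW.heavy (hsum'.trans hz)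
  refine ⟨y, hyN, hy.trans hsum', ?_⟩
  have hround := entropyGap_le_add_of_forall_abs_sub_le hη.1.le hε.le hmod
    (fun i _ => hc.nonneg i) (hc.sum_le_one G)
    (fun i _ => ⟨(hα' i).1, by linarith [(hα' i).2, hη.1]⟩)
    (fun i hi => ⟨by positivity, div_le_one_of_le₀ (Nat.cast_le.2 (hyN i hi)) (by positivity)⟩) hyα
  rw [entropyGap_congr (α := fun i => (y i : ℝ) / _) hW.weight_eq fun _ _ => rfl] at hround
  linarith

lemma IsHeavyWindow.two_rpow_le_rhoSpl {β : ℝ} {k m : ℕ} {c : ℕ → ℝ}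
    (hW : IsHeavyWindow μ e c t m G η) (h : HasExponents μ e) (hc : memC β c k)
    (hn : (n : ℝ) = β * 2 ^ k) (hη : η ∈ Set.Ioc (0 : ℝ) 1) (hηε : η ≤ ε)
    (hmod : IsModulusBinH η ε) (hpoly : ((n : ℝ) + 1) ^ m ≤ 2 ^ (ε * n)) :
    2 ^ ((Gfun β - 9 * ε) * n) ≤ rhoSpl n μ := by
  rcases le_or_gt (1 / 2) (∑ x with e x < t, μ x) with hp | hp
  · refine le_trans ?_ (h.two_rpow_le_rhoSpl_of_half_le hmod hη.2 hp hW.card_low_le)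
    gcongr
    · exact one_le_two
    · linarith [Gfun_nonpos hc, hη.1]
  obtain ⟨y, hyN, hy, hgap⟩ := hW.exists_counts h hc hn hη hηε hmod hp
  have hlower := h.two_rpow_mul_entropyGap_sub_le hmod hW.card_low_le
    (fun i hi => (hW.mem_window i hi).1) hyN hy
  have hcard : #G ≤ m := by
    have hsub : G ⊆ Finset.Ico t (t + m) := fun i hi => Finset.mem_Ico.2 (hW.mem_window i hi)
    simpa using Finset.card_le_card hsub
  have hpoly' : ((n : ℝ) + 1) ^ #G ≤ 2 ^ (ε * n) :=
    (pow_le_pow_right₀ (by linarith [n.cast_nonneg (α := ℝ)]) hcard).trans hpoly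
  refine le_of_mul_le_mul_left ?_ (Real.rpow_pos_of_pos two_pos (ε * n))
  calc (2 : ℝ) ^ (ε * n) * 2 ^ ((Gfun β - 9 * ε) * n)
      = 2 ^ (n * (Gfun β - 7 * ε - ε)) := by
        rw [← Real.rpow_add two_pos]
        congr 1
        ring
    _ ≤ _ := by gcongr; exact one_le_two
    _ ≤ ((n : ℝ) + 1) ^ #G * rhoSpl n μ := hlower
    _ ≤ 2 ^ (ε * n) * rhoSpl n μ := by
        gcongr
        exact rhoSpl_nonneg n μ

lemma exists_forall_two_rpow_le_rhoSpl {β : ℝ} (hβ : 0 < β) (hε : 0 < ε) :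
    ∃ K : ℕ, ∀ k, K ≤ k → ∀ n : ℕ, (n : ℝ) = β * 2 ^ k → ∀ μ : Fin n → ℝ,
      IsDyadicDist n μ → (∀ i, 0 < μ i) → 2 ^ ((Gfun β - ε) * n) ≤ rhoSpl n μ := by
  obtain ⟨δ, hδ, hmod⟩ := exists_isModulusBinH (ε := ε / 9) (by positivity)
  obtain ⟨η, hη₀, hη⟩ : ∃ η, 0 < η ∧ η ≤ min (min 1 (ε / 9)) δ := ⟨_, by positivity, le_rfl⟩
  obtain ⟨⟨hη₁, hηε⟩, hηδ⟩ := by simpa only [le_min_iff] using hη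
  have hmodη : IsModulusBinH η (ε / 9) := fun x hx y hy hxy => hmod x hx y hy (hxy.trans hηδ)
  obtain ⟨m, K₁, hwindow⟩ := exists_heavyWindow (η := η) hβ ⟨hη₀, hη₁⟩
  obtain ⟨K₂, hpoly⟩ := exists_pow_le_two_rpow m (ε := ε / 9) (by positivity)
  obtain ⟨K₃, hlarge⟩ := exists_forall_le_of_natCast_eq hβ K₂
  refine ⟨max K₁ K₃, fun k hk n hn μ hμ hpos => ?_⟩
  choose e he using fun x => (hμ.2.2 x).resolve_left (hpos x).ne'
  have h : HasExponents μ e := ⟨fun x => (he x).1, fun x => (he x).2, hμ.2.1⟩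
  obtain ⟨c, t, G, hc, hW⟩ := hwindow k (le_of_max_le_left hk) n hn μ e h
  have := hW.two_rpow_le_rhoSpl h hc hn ⟨hη₀, hη₁⟩ hηε hmodη
    (hpoly n (hlarge k (le_of_max_le_right hk) n hn))
  rwa [mul_div_cancel₀ _ (by norm_num)] at this

end LowerBound

theorem rhoMin_eq_two_pow_G_general (β : ℝ) (hβ : 0 < β) :
    ∀ ε > (0 : ℝ), ∃ K : ℕ, ∀ k : ℕ, K ≤ k → ∀ n : ℕ, (n : ℝ) = β * 2 ^ k →
      (2 : ℝ) ^ ((Gfun β - ε) * n) ≤ rhoMin n ∧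
      rhoMin n ≤ (2 : ℝ) ^ ((Gfun β + ε) * n) := by
  intro ε hε
  obtain ⟨K₁, hupper⟩ := exists_dist_rhoSpl_le hβ hε
  obtain ⟨K₂, hlower⟩ := exists_forall_two_rpow_le_rhoSpl hβ hε
  refine ⟨max K₁ K₂, fun k hk n hn => ?_⟩
  obtain ⟨μ, hμ, hpos, hne, hle⟩ := hupper k (le_of_max_le_left hk) n hn
  constructor
  · refine le_csInf ⟨_, μ, hμ, hpos, hne, rfl⟩ ?_
    rintro _ ⟨ν, hν, hν₀, -, rfl⟩
    exact hlower k (le_of_max_le_right hk) n hn ν hν hν₀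
  · refine le_trans (csInf_le ⟨0, ?_⟩ ⟨μ, hμ, hpos, hne, rfl⟩) hle
    rintro _ ⟨ν, -, -, -, rfl⟩
    exact rhoSpl_nonneg n ν

/-- Along the sequence `n = β·2^k`, `ρ_min(n) = 2^{G(β)·n ± o(n)}`. -/
theorem rhoMin_eq_two_pow_G (β : ℝ) (hβ : β ∈ Set.Ico (1 : ℝ) 2) :
    ∀ ε > (0 : ℝ), ∃ K : ℕ, ∀ k : ℕ, K ≤ k → ∀ n : ℕ, (n : ℝ) = β * 2 ^ k →
      (2 : ℝ) ^ ((Gfun β - ε) * n) ≤ rhoMin n ∧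
      rhoMin n ≤ (2 : ℝ) ^ ((Gfun β + ε) * n) :=
  rhoMin_eq_two_pow_G_general β (zero_lt_one.trans_le hβ.1)
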